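/- arXiv:2412.09316 — 3 statements merged into one kernel-verified Lean document; each statement's English description precedes it below -/
import Mathlib

section
/- Let D ⊆ ℝ^d be compact and convex, and let ν be a probability measure on D that is absolutely continuous with respect to Lebesgue measure. If ρ is an extreme point of the set F_ν of fusions of ν and ρ has finite support, then there exists a finite partition P of D into convex sets such that, for each B ∈ P, the restriction ρ|_B is dominated by ν|_B in the convex order and ρ|_B has affinely independent support. -/
open MeasureTheory Set Filter Topology
open scoped ENNReal NNReal

noncomputable section

/-- Euclidean space `ℝ^d`. -/
abbrev Euc (d : ℕ) : Type := EuclideanSpace ℝ (Fin d)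

/-- `ρ ⪯ μ` in the convex order: `∫ ψ dρ ≤ ∫ ψ dμ` for every convex function `ψ` for which
both integrals exist. -/
def ConvexOrderLE {d : ℕ} (ρ μ : Measure (Euc d)) : Prop :=
  ∀ ψ : Euc d → ℝ, ConvexOn ℝ Set.univ ψ → Integrable ψ μ → Integrable ψ ρ →
    ∫ x, ψ x ∂ρ ≤ ∫ x, ψ x ∂μ

/-- The set of fusions of `ν`: probability measures supported on `D` that are dominated by `ν`
in the convex order. -/
def fusions {d : ℕ} (D : Set (Euc d)) (ν : Measure (Euc d)) : Set (Measure (Euc d)) :=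
  {ρ | IsProbabilityMeasure ρ ∧ ρ Dᶜ = 0 ∧ ConvexOrderLE ρ ν}

/-- The (topological) support of a measure. -/
def msupport {d : ℕ} (ρ : Measure (Euc d)) : Set (Euc d) := {x | ∀ U ∈ nhds x, ρ U ≠ 0}

/-- Laguerre cell of site `x_i` with weight `g_i` inside the domain `D`. -/
def LaguerreCell {d n : ℕ} (D : Set (Euc d)) (X : Fin n → Euc d) (g : Fin n → ℝ)
    (i : Fin n) : Set (Euc d) :=
  {y ∈ D | ∀ j, ‖y - X i‖ ^ 2 - g i ≤ ‖y - X j‖ ^ 2 - g j}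

/-!
Let `ρ` have finite support `T`. By duality, `ρ ⪯ ν` amounts to
`∑ x ∈ T, ρ {x} * u x x ≤ ∫ max u ∂ν` for all families `u` of affine functions indexed by `T`,
with equality when `u` is constant. If equality holds for no other `u`, homogeneity and compactness
give a gap that absorbs a small perturbation of the weights of `ρ` along any affine dependency of
`T`, in both directions. So if `ρ` is extreme and `T` is affinely dependent, then some nonconstant
`u` achieves equality; that is, `max u` has the same integral under `ρ` and `ν`, and each atom `x`
lies where `u x` attains the maximum. The convex cells on which a given member of `u` is the
maximum then split `ρ` and `ν` compatibly with the convex order, and each cell misses an atom of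
`ρ`. Extremality passes to the cells in the form of rigidity under bounded densities, so one
concludes by induction on the size of the support.
-/

open Bornology

section Integrals

variable {E : Type*} [NormedAddCommGroup E] [NormedSpace ℝ E] [FiniteDimensional ℝ E]
  [MeasurableSpace E] [BorelSpace E] {μ : Measure E} [IsFiniteMeasure μ]

theorem integrable_of_continuous_of_isBounded_support (hμ : IsBounded μ.support) {f : E → ℝ}
    (hf : Continuous f) : Integrable f μ := by
  have := FiniteDimensional.proper ℝ E
  obtain ⟨C, hC⟩ := hμ.isCompact_closure.exists_bound_of_continuousOn hf.continuousOn
  refine .of_bound hf.aestronglyMeasurable C ?_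
  filter_upwards [μ.support_mem_ae] with x hx using hC x (subset_closure hx)

theorem integrable_of_convexOn_of_isBounded_support (hμ : IsBounded μ.support) {f : E → ℝ}
    (hf : ConvexOn ℝ univ f) : Integrable f μ :=
  integrable_of_continuous_of_isBounded_support hμ hf.locallyLipschitz.continuous

end Integrals

theorem tendsto_integral_max_zero_sub_natCast_mul {α : Type*} [MeasurableSpace α] {μ : Measure α}
    {f g : α → ℝ} (hf : Integrable f μ) (hf₀ : ∀ x, 0 ≤ f x) (hg : Measurable g)
    (hg₀ : ∀ x, 0 ≤ g x) :
    Tendsto (fun n : ℕ ↦ ∫ x, max 0 (f x - n * g x) ∂μ) atTop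
      (𝓝 (∫ x in {x | g x = 0}, f x ∂μ)) := by
  have hzero : MeasurableSet {x | g x = 0} := hg (measurableSet_singleton 0)
  rw [← integral_indicator hzero]
  refine tendsto_integral_of_dominated_convergence f
    (fun n ↦ aestronglyMeasurable_const.sup (hf.1.sub (hg.const_mul _).aestronglyMeasurable)) hf
    (fun n ↦ .of_forall fun x ↦ ?_) (.of_forall fun x ↦ ?_)
  · rw [Real.norm_of_nonneg (le_max_left _ _)]
    exact max_le (hf₀ x) (sub_le_self _ (mul_nonneg n.cast_nonneg (hg₀ x)))
  · refine tendsto_const_nhds.congr' ?_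
    by_cases hx : g x = 0
    · simp [hx, hf₀ x]
    · obtain ⟨N, hN⟩ := exists_nat_ge (f x / g x)
      have hgx : 0 < g x := (hg₀ x).lt_of_ne' hx
      filter_upwards [eventually_ge_atTop N] with n hn
      have : f x ≤ n * g x :=
        (div_le_iff₀ hgx).1 (hN.trans (Nat.cast_le.2 hn))
      simp [hx, this]

section Affine

variable {E : Type*} [NormedAddCommGroup E] [NormedSpace ℝ E]

theorem convexOn_continuousAffineMap (a : E →ᴬ[ℝ] ℝ) : ConvexOn ℝ univ a :=
  ⟨convex_univ, fun _ _ _ _ _ _ _ _ hst ↦ (Convex.combo_affine_apply (f := a.toAffineMap) hst).le⟩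

theorem measure_setOf_eq_of_ne [MeasurableSpace E] {ν : Measure E}
    (hν : ∀ S : AffineSubspace ℝ E, S ≠ ⊤ → ν S = 0) {a b : E →ᴬ[ℝ] ℝ} (hab : a ≠ b) :
    ν {y | a y = b y} = 0 := by
  have hspan : ({y | a y = b y} : Set E) =
      (AffineSubspace.mk' (0 : ℝ) ⊥).comap (a - b).toAffineMap := by
    ext y
    simp [sub_eq_zero]
  rw [hspan]
  refine hν _ fun htop ↦ hab (ContinuousAffineMap.ext fun y ↦ ?_)
  have hy : y ∈ {y | a y = b y} := by simp [hspan, htop]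
  exact hy

/-- The upper envelope `y ↦ maxᵢ uᵢ(y)` of a finite family of affine functions. -/
def upperEnvelope {ι : Type*} (u : ι → E →ᴬ[ℝ] ℝ) (y : E) : ℝ :=
  ⨆ i, u i y

variable {ι : Type*}

theorem le_upperEnvelope [Finite ι] (u : ι → E →ᴬ[ℝ] ℝ) (i : ι) (y : E) :
    u i y ≤ upperEnvelope u y :=
  le_ciSup (f := fun i ↦ u i y) (finite_range _).bddAbove i

theorem upperEnvelope_le [Nonempty ι] {u : ι → E →ᴬ[ℝ] ℝ} {y : E} {c : ℝ} (h : ∀ i, u i y ≤ c) :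
    upperEnvelope u y ≤ c :=
  ciSup_le h

theorem convexOn_upperEnvelope [Finite ι] [Nonempty ι] (u : ι → E →ᴬ[ℝ] ℝ) :
    ConvexOn ℝ univ (upperEnvelope u) := by
  refine ⟨convex_univ, fun x _ y _ s t hs ht hst ↦ upperEnvelope_le fun i ↦ ?_⟩
  calc u i (s • x + t • y) ≤ s • u i x + t • u i y :=
        (convexOn_continuousAffineMap (u i)).2 (mem_univ x) (mem_univ y) hs ht hst
    _ ≤ s • upperEnvelope u x + t • upperEnvelope u y := by
        gcongr <;> exact le_upperEnvelope u i _

theorem continuous_uncurry_continuousAffineMap_apply :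
    Continuous fun p : (E →ᴬ[ℝ] ℝ) × E ↦ p.1 p.2 := by
  have hdecomp : Continuous fun p : (E →ᴬ[ℝ] ℝ) × E ↦
      (ContinuousAffineMap.decompLinearIsometryEquiv ℝ ℝ E ℝ p.1).2 p.2 +
        (ContinuousAffineMap.decompLinearIsometryEquiv ℝ ℝ E ℝ p.1).1 := by
    fun_prop
  exact hdecomp.congr fun p ↦ (congr_fun p.1.decomp p.2).symm

theorem continuous_uncurry_upperEnvelope [Finite ι] [Nonempty ι] :
    Continuous fun p : (ι → E →ᴬ[ℝ] ℝ) × E ↦ upperEnvelope p.1 p.2 := by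
  have := Fintype.ofFinite ι
  simp_rw [upperEnvelope, ← Finset.sup'_univ_eq_ciSup]
  refine Continuous.finset_sup'_apply _ fun i _ ↦ ?_
  have hpair : Continuous fun p : (ι → E →ᴬ[ℝ] ℝ) × E ↦ (p.1 i, p.2) := by fun_prop
  exact continuous_uncurry_continuousAffineMap_apply.comp hpair

instance finiteDimensional_continuousAffineMap [FiniteDimensional ℝ E] :
    FiniteDimensional ℝ (E →ᴬ[ℝ] ℝ) :=
  (ContinuousAffineMap.decompLinearEquiv ℝ ℝ E ℝ).symm.finiteDimensional

theorem continuous_integral_upperEnvelope [FiniteDimensional ℝ E] [MeasurableSpace E]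
    [BorelSpace E] {ν : Measure E} [IsFiniteMeasure ν] (hν : IsBounded ν.support) [Finite ι]
    [Nonempty ι] : Continuous fun u : ι → E →ᴬ[ℝ] ℝ ↦ ∫ y, upperEnvelope u y ∂ν := by
  have := FiniteDimensional.proper ℝ E
  have := Fintype.ofFinite ι
  have hrestrict : ν.restrict (closure ν.support) = ν :=
    Measure.restrict_eq_self_of_ae_mem (mem_of_superset ν.support_mem_ae subset_closure)
  rw [← hrestrict]
  exact continuous_parametric_integral_of_continuous continuous_uncurry_upperEnvelope
    hν.isCompact_closure

end Affine

section Finpartition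

variable {α : Type*} {D : Set α}

theorem biUnion_finpartition_parts (P : Finpartition D) : ⋃ B ∈ P.parts, B = D := by
  simpa only [Finset.sup_eq_iSup, iSup_eq_iUnion, id] using P.sup_parts

variable [MeasurableSpace α] {P : Finpartition D}

theorem sum_measureReal_finpartition_parts {μ : Measure α} [IsFiniteMeasure μ]
    (hP : ∀ B ∈ P.parts, MeasurableSet B) : ∑ B ∈ P.parts, μ.real B = μ.real D :=
  (measureReal_biUnion_finset P.disjoint hP).symm.trans
    (congrArg μ.real (biUnion_finpartition_parts P))

theorem measureReal_eq_of_le_of_mem_finpartition_parts {ρ ν : Measure α} [IsFiniteMeasure ρ]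
    [IsFiniteMeasure ν] (hP : ∀ B ∈ P.parts, MeasurableSet B)
    (hle : ∀ B ∈ P.parts, ρ.real B ≤ ν.real B) (hD : ρ.real D = ν.real D) :
    ∀ B ∈ P.parts, ρ.real B = ν.real B := by
  rw [← sum_measureReal_finpartition_parts hP, ← sum_measureReal_finpartition_parts hP] at hD
  exact (Finset.sum_eq_sum_iff_of_le hle).1 hD

theorem sum_setIntegral_finpartition_parts {μ : Measure α} (hP : ∀ B ∈ P.parts, MeasurableSet B)
    (hμ : μ Dᶜ = 0) {f : α → ℝ} (hf : Integrable f μ) :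
    ∑ B ∈ P.parts, ∫ x in B, f x ∂μ = ∫ x, f x ∂μ := by
  rw [← integral_biUnion_finset P.parts hP P.disjoint fun B _ ↦ hf.integrableOn,
    biUnion_finpartition_parts, Measure.restrict_eq_self_of_ae_mem hμ]

end Finpartition

section Argmax

variable {E ι : Type*} [NormedAddCommGroup E] [NormedSpace ℝ E]

/-- The region where `uᵢ` is the largest of a finite family of affine functions. Ties go to the
largest index, so that these regions partition the space and remain convex. -/
def argmaxCell [LinearOrder ι] (u : ι → E →ᴬ[ℝ] ℝ) (i : ι) : Set E :=
  {y | ∀ j, u j y ≤ u i y ∧ (i < j → u j y < u i y)}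

theorem convex_argmaxCell [LinearOrder ι] (u : ι → E →ᴬ[ℝ] ℝ) (i : ι) :
    Convex ℝ (argmaxCell u i) := by
  have hle (j : ι) : Convex ℝ {y | u j y ≤ u i y} := by
    simpa using (convexOn_continuousAffineMap (u j - u i)).convex_le 0
  have hlt (j : ι) : Convex ℝ {y | u j y < u i y} := by
    simpa using (convexOn_continuousAffineMap (u j - u i)).convex_lt 0
  simp only [argmaxCell, ofPred_forall, ofPred_and]
  exact convex_iInter fun j ↦ (hle j).inter (convex_iInter fun _ ↦ hlt j)

theorem measurableSet_argmaxCell [LinearOrder ι] [Finite ι] [MeasurableSpace E] [BorelSpace E]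
    (u : ι → E →ᴬ[ℝ] ℝ) (i : ι) : MeasurableSet (argmaxCell u i) := by
  simp only [argmaxCell, ofPred_forall, ofPred_and]
  exact .iInter fun j ↦ (measurableSet_le (u j).continuous.measurable
    (u i).continuous.measurable).inter (.iInter fun _ ↦ measurableSet_lt
      (u j).continuous.measurable (u i).continuous.measurable)

theorem pairwise_disjoint_argmaxCell [LinearOrder ι] (u : ι → E →ᴬ[ℝ] ℝ) :
    Pairwise (Function.onFun Disjoint (argmaxCell u)) := by
  have hlt {i j : ι} (hij : i < j) : Disjoint (argmaxCell u i) (argmaxCell u j) :=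
    disjoint_left.2 fun y hi hj ↦ ((hi j).2 hij).not_ge (hj i).1
  exact fun i j hij ↦ hij.lt_or_gt.elim hlt fun hji ↦ (hlt hji).symm

theorem exists_mem_argmaxCell [LinearOrder ι] [Finite ι] [Nonempty ι] (u : ι → E →ᴬ[ℝ] ℝ)
    (y : E) : ∃ i, y ∈ argmaxCell u i := by
  obtain ⟨i, hi⟩ := Finite.exists_max fun i ↦ toLex (u i y, i)
  refine ⟨i, fun j ↦ ?_⟩
  rcases Prod.Lex.toLex_le_toLex.1 (hi j) with hlt | ⟨heq, hji⟩
  · exact ⟨hlt.le, fun _ ↦ hlt⟩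
  · exact ⟨heq.le, fun hij ↦ absurd hij hji.not_gt⟩

theorem exists_finpartition_convex_argmax [Finite ι] [Nonempty ι] [MeasurableSpace E]
    [BorelSpace E] (u : ι → E →ᴬ[ℝ] ℝ) {D : Set E} (hD : Convex ℝ D) (hDm : MeasurableSet D) :
    ∃ P : Finpartition D, ∀ B ∈ P.parts, Convex ℝ B ∧ MeasurableSet B ∧ ∃ i,
      (∀ y ∈ B, u i y = upperEnvelope u y) ∧ ∀ y ∈ D, (∀ j ≠ i, u j y < u i y) → y ∈ B := by
  classical
  have := Fintype.ofFinite ι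
  let _ : LinearOrder ι := LinearOrder.lift' (Finite.equivFin ι) (Finite.equivFin ι).injective
  have hindep : (Finset.univ.image fun i ↦ D ∩ argmaxCell u i).SupIndep id := by
    rw [Finset.supIndep_iff_pairwiseDisjoint]
    intro B hB B' hB' hne
    obtain ⟨i, -, rfl⟩ := Finset.mem_image.1 hB
    obtain ⟨j, -, rfl⟩ := Finset.mem_image.1 hB'
    have hij : i ≠ j := fun h ↦ hne (h ▸ rfl)
    exact (pairwise_disjoint_argmaxCell u hij).mono inter_subset_right inter_subset_right
  have hsup : (Finset.univ.image fun i ↦ D ∩ argmaxCell u i).sup id = D := by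
    rw [Finset.sup_image, Finset.sup_univ_eq_iSup]
    change ⋃ i, D ∩ argmaxCell u i = D
    rw [← inter_iUnion, inter_eq_left]
    exact fun y _ ↦ mem_iUnion.2 (exists_mem_argmaxCell u y)
  refine ⟨.ofErase _ hindep hsup, fun B hB ↦ ?_⟩
  obtain ⟨i, -, rfl⟩ := Finset.mem_image.1 (Finset.mem_of_mem_erase hB)
  refine ⟨hD.inter (convex_argmaxCell u i), hDm.inter (measurableSet_argmaxCell u i), i,
    fun y hy ↦ (le_upperEnvelope u i y).antisymm (upperEnvelope_le fun j ↦ (hy.2 j).1),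
    fun y hy hlt ↦ ⟨hy, fun j ↦ ?_⟩⟩
  rcases eq_or_ne j i with rfl | hj
  · exact ⟨le_rfl, fun h ↦ absurd h (lt_irrefl j)⟩
  · exact ⟨(hlt j hj).le, fun _ ↦ hlt j hj⟩

end Argmax

section ConvexOrder

variable {d : ℕ} {ρ ν : Measure (Euc d)}

theorem ConvexOrderLE.of_finpartition {D : Set (Euc d)} {P : Finpartition D}
    (hP : ∀ B ∈ P.parts, MeasurableSet B) (hρ : ρ Dᶜ = 0) (hν : ν Dᶜ = 0)
    (h : ∀ B ∈ P.parts, ConvexOrderLE (ρ.restrict B) (ν.restrict B)) : ConvexOrderLE ρ ν := by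
  intro ψ hψ hψν hψρ
  rw [← sum_setIntegral_finpartition_parts hP hρ hψρ,
    ← sum_setIntegral_finpartition_parts hP hν hψν]
  exact Finset.sum_le_sum fun B hB ↦ h B hB ψ hψ hψν.restrict hψρ.restrict

variable [IsFiniteMeasure ρ] [IsFiniteMeasure ν]

theorem ConvexOrderLE.measure_univ_eq (h : ConvexOrderLE ρ ν) : ρ univ = ν univ := by
  have hconst (c : ℝ) := h (fun _ ↦ c) (convexOn_const c convex_univ) (integrable_const c)
    (integrable_const c)
  have hle := hconst 1
  have hge := hconst (-1)
  simp only [integral_const, smul_eq_mul, mul_one, mul_neg, neg_le_neg_iff] at hle hge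
  exact (measureReal_eq_measureReal_iff).1 (hle.antisymm hge)

theorem ConvexOrderLE.integral_le (h : ConvexOrderLE ρ ν) (hρ : IsBounded ρ.support)
    (hν : IsBounded ν.support) {ψ : Euc d → ℝ} (hψ : ConvexOn ℝ univ ψ) :
    ∫ x, ψ x ∂ρ ≤ ∫ x, ψ x ∂ν :=
  h ψ hψ (integrable_of_convexOn_of_isBounded_support hν hψ)
    (integrable_of_convexOn_of_isBounded_support hρ hψ)

theorem ConvexOrderLE.integral_continuousAffineMap_eq (h : ConvexOrderLE ρ ν)
    (hρ : IsBounded ρ.support) (hν : IsBounded ν.support) (a : Euc d →ᴬ[ℝ] ℝ) :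
    ∫ x, a x ∂ρ = ∫ x, a x ∂ν := by
  refine (h.integral_le hρ hν (convexOn_continuousAffineMap a)).antisymm ?_
  have hneg := h.integral_le hρ hν (convexOn_continuousAffineMap (-a))
  simpa [integral_neg] using hneg

theorem convexOrderLE_of_forall_nonneg (hρ : IsBounded ρ.support) (hν : IsBounded ν.support)
    (hmass : ρ univ = ν univ)
    (h : ∀ ψ : Euc d → ℝ, ConvexOn ℝ univ ψ → (∀ x, 0 ≤ ψ x) → ∫ x, ψ x ∂ρ ≤ ∫ x, ψ x ∂ν) :
    ConvexOrderLE ρ ν := by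
  intro ψ hψ hψν hψρ
  obtain ⟨C, hC⟩ := (hρ.union hν).isCompact_closure.exists_bound_of_continuousOn
    hψ.locallyLipschitz.continuous.continuousOn
  have htrunc {x : Euc d} (hx : x ∈ ρ.support ∪ ν.support) : max (ψ x + C) 0 = ψ x + C :=
    max_eq_left (neg_le_iff_add_nonneg.1 (neg_le_of_abs_le (hC x (subset_closure hx))))
  have hshift := h _ ((hψ.add_const C).sup (convexOn_const 0 convex_univ))
    fun x ↦ le_max_right _ _
  have hρ_ae : ∀ᵐ x ∂ρ, max (ψ x + C) 0 = ψ x + C := by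
    filter_upwards [ρ.support_mem_ae] with x hx using htrunc (.inl hx)
  have hν_ae : ∀ᵐ x ∂ν, max (ψ x + C) 0 = ψ x + C := by
    filter_upwards [ν.support_mem_ae] with x hx using htrunc (.inr hx)
  change ∫ x, max (ψ x + C) 0 ∂ρ ≤ ∫ x, max (ψ x + C) 0 ∂ν at hshift
  rw [integral_congr_ae hρ_ae, integral_congr_ae hν_ae, integral_add hψρ (integrable_const C),
    integral_add hψν (integrable_const C)] at hshift
  simpa [Measure.real, hmass] using hshift

theorem ConvexOrderLE.setIntegral_contact_le (h : ConvexOrderLE ρ ν) (hρ : IsBounded ρ.support)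
    (hν : IsBounded ν.support) {φ : Euc d → ℝ} (hφ : ConvexOn ℝ univ φ)
    (heq : ∫ x, φ x ∂ρ = ∫ x, φ x ∂ν) {a : Euc d →ᴬ[ℝ] ℝ} (ha : ∀ x, a x ≤ φ x) {ψ : Euc d → ℝ}
    (hψ : ConvexOn ℝ univ ψ) (hψ₀ : ∀ x, 0 ≤ ψ x) :
    ∫ x in {x | φ x = a x}, ψ x ∂ρ ≤ ∫ x in {x | φ x = a x}, ψ x ∂ν := by
  have hlim {μ : Measure (Euc d)} [IsFiniteMeasure μ] (hμ : IsBounded μ.support) :=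
    tendsto_integral_max_zero_sub_natCast_mul (integrable_of_convexOn_of_isBounded_support hμ hψ)
      hψ₀ (g := fun x ↦ φ x - a x)
      (hφ.locallyLipschitz.continuous.sub a.continuous).measurable fun x ↦ sub_nonneg.2 (ha x)
  simp only [sub_eq_zero] at hlim
  -- Testing on `max (nφ) (na + ψ)` and subtracting `nφ` leaves `(ψ - n(φ - a))⁺`, which
  -- tends to the restriction of `ψ` to the contact set as `n → ∞`.
  refine le_of_tendsto_of_tendsto' (hlim hρ) (hlim hν) fun n ↦ ?_
  have hnφ : ConvexOn ℝ univ fun x ↦ n * φ x := hφ.smul n.cast_nonneg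
  have hna : ConvexOn ℝ univ fun x ↦ n * a x + ψ x :=
    ((convexOn_continuousAffineMap a).smul n.cast_nonneg).add hψ
  have hmax : ConvexOn ℝ univ fun x ↦ max (n * φ x) (n * a x + ψ x) := hnφ.sup hna
  have hsplit {μ : Measure (Euc d)} [IsFiniteMeasure μ] (hμ : IsBounded μ.support) :
      ∫ x, max 0 (ψ x - n * (φ x - a x)) ∂μ =
        ∫ x, max (n * φ x) (n * a x + ψ x) ∂μ - n * ∫ x, φ x ∂μ := by
    rw [← integral_const_mul, ← integral_sub
      (integrable_of_convexOn_of_isBounded_support hμ hmax)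
      (integrable_of_convexOn_of_isBounded_support hμ hnφ)]
    refine integral_congr_ae (.of_forall fun x ↦ ?_)
    simp only [← max_sub_sub_right]
    ring_nf
  rw [hsplit hρ, hsplit hν, heq]
  exact sub_le_sub_right (h.integral_le hρ hν hmax) _

end ConvexOrder

section Contact

variable {d : ℕ} {ρ ν : Measure (Euc d)} [IsFiniteMeasure ρ] [IsFiniteMeasure ν]

theorem ConvexOrderLE.measureReal_contact_le (h : ConvexOrderLE ρ ν) (hρ : IsBounded ρ.support)
    (hν : IsBounded ν.support) {φ : Euc d → ℝ} (hφ : ConvexOn ℝ univ φ)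
    (heq : ∫ x, φ x ∂ρ = ∫ x, φ x ∂ν) {a : Euc d →ᴬ[ℝ] ℝ} (ha : ∀ x, a x ≤ φ x) :
    ρ.real {x | φ x = a x} ≤ ν.real {x | φ x = a x} := by
  simpa using h.setIntegral_contact_le hρ hν hφ heq ha (convexOn_const 1 convex_univ)
    fun _ ↦ zero_le_one

theorem ConvexOrderLE.measure_contact_inter_contact_eq_zero (h : ConvexOrderLE ρ ν)
    (hρ : IsBounded ρ.support) (hν : IsBounded ν.support)
    (hnull : ∀ S : AffineSubspace ℝ (Euc d), S ≠ ⊤ → ν S = 0) {φ : Euc d → ℝ}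
    (hφ : ConvexOn ℝ univ φ) (heq : ∫ x, φ x ∂ρ = ∫ x, φ x ∂ν) {a b : Euc d →ᴬ[ℝ] ℝ}
    (ha : ∀ x, a x ≤ φ x) (hb : ∀ x, b x ≤ φ x) (hab : a ≠ b) :
    ρ {x | φ x = a x ∧ φ x = b x} = 0 := by
  let m : Euc d →ᴬ[ℝ] ℝ := (1 / 2 : ℝ) • (a + b)
  have hm (x : Euc d) : m x = (a x + b x) / 2 := by
    simp [m, div_eq_inv_mul, mul_add]
  have hcontact : {x | φ x = m x} = {x | φ x = a x ∧ φ x = b x} := by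
    ext x
    have := ha x
    have := hb x
    simp only [hm, mem_ofPred_eq]
    constructor
    · intro hx
      constructor <;> linarith
    · rintro ⟨hxa, hxb⟩
      linarith
  have hle := h.measureReal_contact_le hρ hν hφ heq (a := m) fun x ↦ by
    linarith [ha x, hb x, hm x]
  have hν₀ : ν {x | φ x = a x ∧ φ x = b x} = 0 :=
    measure_mono_null (fun x hx ↦ hx.1.symm.trans hx.2) (measure_setOf_eq_of_ne hnull hab)
  rw [hcontact, measureReal_def ν, hν₀, ENNReal.toReal_zero] at hle
  exact (measureReal_eq_zero_iff).1 (hle.antisymm measureReal_nonneg)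

variable {ι : Type*} [Finite ι] {u : ι → Euc d →ᴬ[ℝ] ℝ} {D B : Set (Euc d)}

omit [IsFiniteMeasure ν] in
theorem ae_eq_setOf_upperEnvelope_eq [Nonempty ι]
    (hnull : ∀ S : AffineSubspace ℝ (Euc d), S ≠ ⊤ → ν S = 0) (hu : Function.Injective u)
    (hνD : ν Dᶜ = 0) {i : ι} (hBi : ∀ y ∈ B, u i y = upperEnvelope u y)
    (hiB : ∀ y ∈ D, (∀ j ≠ i, u j y < u i y) → y ∈ B) :
    B =ᵐ[ν] {y | upperEnvelope u y = u i y} := by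
  have hne : ∀ᵐ y ∂ν, ∀ j ≠ i, u j y ≠ u i y := by
    refine ae_all_iff.2 fun j ↦ ?_
    by_cases hj : j = i
    · simp [hj]
    · simpa [hj, ae_iff] using measure_setOf_eq_of_ne hnull (hu.ne hj)
  filter_upwards [hne, mem_ae_iff.2 hνD] with y hy hyD
  refine propext ⟨fun hyB ↦ (hBi y hyB).symm, fun hi ↦ hiB y hyD fun j hj ↦ ?_⟩
  exact (hi ▸ le_upperEnvelope u j y).lt_of_ne (hy j hj)

theorem ConvexOrderLE.restrict_of_ae_eq_contact (h : ConvexOrderLE ρ ν)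
    (hρ : IsBounded ρ.support) (hν : IsBounded ν.support) {φ : Euc d → ℝ}
    (hφ : ConvexOn ℝ univ φ) (heq : ∫ x, φ x ∂ρ = ∫ x, φ x ∂ν) {a : Euc d →ᴬ[ℝ] ℝ}
    (ha : ∀ x, a x ≤ φ x) (hBa : ∀ y ∈ B, φ y = a y) (hB : B =ᵐ[ν] {y | φ y = a y})
    (hmass : ρ.real B = ν.real B) : ConvexOrderLE (ρ.restrict B) (ν.restrict B) := by
  refine convexOrderLE_of_forall_nonneg (hρ.subset (Measure.support_mono Measure.restrict_le_self))
    (hν.subset (Measure.support_mono Measure.restrict_le_self)) ?_ fun ψ hψ hψ₀ ↦ ?_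
  · simpa using (measureReal_eq_measureReal_iff).1 hmass
  · calc ∫ x in B, ψ x ∂ρ ≤ ∫ x in {y | φ y = a y}, ψ x ∂ρ :=
          setIntegral_mono_set
            (integrable_of_convexOn_of_isBounded_support hρ hψ).integrableOn
            (.of_forall hψ₀) (LE.le.eventuallyLE hBa)
      _ ≤ ∫ x in {y | φ y = a y}, ψ x ∂ν := h.setIntegral_contact_le hρ hν hφ heq ha hψ hψ₀
      _ = ∫ x in B, ψ x ∂ν := setIntegral_congr_set hB.symm

theorem ConvexOrderLE.exists_finpartition_of_contact [Nontrivial ι] (h : ConvexOrderLE ρ ν)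
    (hρ : IsBounded ρ.support) (hν : IsBounded ν.support)
    (hnull : ∀ S : AffineSubspace ℝ (Euc d), S ≠ ⊤ → ν S = 0) (hD : Convex ℝ D)
    (hDm : MeasurableSet D) (hρD : ρ Dᶜ = 0) (hνD : ν Dᶜ = 0) (hu : Function.Injective u)
    (heq : ∫ x, upperEnvelope u x ∂ρ = ∫ x, upperEnvelope u x ∂ν)
    (hcontact : ∀ i, ∃ x, ρ {x} ≠ 0 ∧ upperEnvelope u x = u i x) :
    ∃ P : Finpartition D, ∀ B ∈ P.parts, Convex ℝ B ∧ MeasurableSet B ∧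
      ConvexOrderLE (ρ.restrict B) (ν.restrict B) ∧ ∃ x ∉ B, ρ {x} ≠ 0 := by
  obtain ⟨P, hP⟩ := exists_finpartition_convex_argmax u hD hDm
  have hφ := convexOn_upperEnvelope u
  have hle_real (B) (hB : B ∈ P.parts) : ρ.real B ≤ ν.real B := by
    obtain ⟨-, -, i, hBi, hiB⟩ := hP B hB
    calc ρ.real B ≤ ρ.real {y | upperEnvelope u y = u i y} :=
          measureReal_mono fun y hy ↦ (hBi y hy).symm
      _ ≤ ν.real {y | upperEnvelope u y = u i y} :=
          h.measureReal_contact_le hρ hν hφ heq (le_upperEnvelope u i)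
      _ = ν.real B := measureReal_congr (ae_eq_setOf_upperEnvelope_eq hnull hu hνD hBi hiB).symm
  have hmass_D : ρ.real D = ν.real D := by
    rw [measureReal_def, measureReal_def, measure_of_measure_compl_eq_zero hρD,
      measure_of_measure_compl_eq_zero hνD, h.measure_univ_eq]
  have hmass := measureReal_eq_of_le_of_mem_finpartition_parts (fun B hB ↦ (hP B hB).2.1)
    hle_real hmass_D
  refine ⟨P, fun B hB ↦ ?_⟩
  obtain ⟨hBconv, hBm, i, hBi, hiB⟩ := hP B hB
  refine ⟨hBconv, hBm, h.restrict_of_ae_eq_contact hρ hν hφ heq (le_upperEnvelope u i)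
    (fun y hy ↦ (hBi y hy).symm) (ae_eq_setOf_upperEnvelope_eq hnull hu hνD hBi hiB)
    (hmass B hB), ?_⟩
  obtain ⟨j, hji⟩ := exists_ne i
  obtain ⟨x, hx, hxj⟩ := hcontact j
  have hdouble := h.measure_contact_inter_contact_eq_zero hρ hν hnull hφ heq
    (le_upperEnvelope u i) (le_upperEnvelope u j) (hu.ne hji.symm)
  have hx_notMem : x ∉ B := fun hxB ↦
    hx (measure_mono_null (singleton_subset_iff.2 (And.intro (hBi x hxB).symm hxj)) hdouble)
  exact ⟨x, hx_notMem, hx⟩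

end Contact

section DensityRigid

variable {d : ℕ} {D : Set (Euc d)} {ρ ν : Measure (Euc d)}

/-- `ρ` is not the midpoint of two distinct measures `(1 ± s) ρ ⪯ ν` with bounded relative density:
this is the only consequence of extremality among the fusions of `ν` that is needed, and unlike
extremality it makes sense for measures of any mass. -/
def DensityRigid (ρ ν : Measure (Euc d)) : Prop :=
  ∀ s : Euc d → ℝ, Measurable s → (∀ x, |s x| ≤ 1) →
    ConvexOrderLE (ρ.withDensity fun x ↦ .ofReal (1 + s x)) ν →
    ConvexOrderLE (ρ.withDensity fun x ↦ .ofReal (1 - s x)) ν → s =ᵐ[ρ] 0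

theorem withDensity_mem_fusions [IsProbabilityMeasure ν] [IsFiniteMeasure ρ] (hρD : ρ Dᶜ = 0)
    {f : Euc d → ℝ} (hf : Integrable f ρ)
    (h : ConvexOrderLE (ρ.withDensity fun x ↦ .ofReal (f x)) ν) :
    (ρ.withDensity fun x ↦ .ofReal (f x)) ∈ fusions D ν := by
  have := isFiniteMeasure_withDensity_ofReal hf.2
  exact ⟨⟨h.measure_univ_eq.trans measure_univ⟩, withDensity_absolutelyContinuous _ _ hρD, h⟩

theorem half_smul_withDensity_add_half_smul_withDensity {s : Euc d → ℝ} (hs : Measurable s)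
    (hs₁ : ∀ x, |s x| ≤ 1) :
    ENNReal.ofReal (1 / 2) • ρ.withDensity (fun x ↦ .ofReal (1 + s x)) +
      ENNReal.ofReal (1 - 1 / 2) • ρ.withDensity (fun x ↦ .ofReal (1 - s x)) = ρ := by
  have hplus : Measurable fun x ↦ ENNReal.ofReal (1 + s x) := by fun_prop
  have hminus : Measurable fun x ↦ ENNReal.ofReal (1 - s x) := by fun_prop
  rw [← withDensity_smul _ hplus, ← withDensity_smul _ hminus,
    ← withDensity_add_left (hplus.const_smul _)]
  convert withDensity_one (μ := ρ) using 2
  ext1 x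
  obtain ⟨hl, hr⟩ := abs_le.1 (hs₁ x)
  simp only [Pi.add_apply, Pi.smul_apply, smul_eq_mul, Pi.one_apply]
  rw [← ENNReal.ofReal_mul (by norm_num), ← ENNReal.ofReal_mul (by norm_num),
    ← ENNReal.ofReal_add (by linarith) (by linarith)]
  simp only [ENNReal.ofReal_eq_one]
  ring

theorem densityRigid_of_extreme [IsProbabilityMeasure ν] (hρ : ρ ∈ fusions D ν)
    (hext : ∀ w ∈ fusions D ν, ∀ z ∈ fusions D ν, ∀ a : ℝ, 0 < a → a < 1 →
      ρ = ENNReal.ofReal a • w + ENNReal.ofReal (1 - a) • z → w = z) :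
    DensityRigid ρ ν := by
  obtain ⟨_, hρD, -⟩ := hρ
  intro s hs hs₁ hplus hminus
  have hs_int : Integrable s ρ := .of_bound hs.aestronglyMeasurable 1 (.of_forall hs₁)
  have hone : Integrable (fun _ ↦ (1 : ℝ)) ρ := integrable_const 1
  have hfusion_plus := withDensity_mem_fusions hρD (hone.add hs_int) hplus
  have hfusion_minus := withDensity_mem_fusions hρD (hone.sub hs_int) hminus
  have hdensity := hext _ hfusion_plus _ hfusion_minus (1 / 2) (by norm_num) (by norm_num)
    (half_smul_withDensity_add_half_smul_withDensity hs hs₁).symm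
  rw [withDensity_eq_iff (by fun_prop) (by fun_prop)
    ((hone.add hs_int).lintegral_lt_top.ne)] at hdensity
  filter_upwards [hdensity] with x hx
  obtain ⟨hl, hr⟩ := abs_le.1 (hs₁ x)
  simp only [Pi.add_apply, Pi.sub_apply] at hx
  rw [ENNReal.ofReal_eq_ofReal_iff (by linarith) (by linarith)] at hx
  simp only [Pi.zero_apply]
  linarith

theorem ConvexOrderLE.withDensity_of_restrict {P : Finpartition D}
    (hP : ∀ B ∈ P.parts, MeasurableSet B) (hρ : ρ Dᶜ = 0) (hν : ν Dᶜ = 0)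
    (hle : ∀ B ∈ P.parts, ConvexOrderLE (ρ.restrict B) (ν.restrict B)) {B : Set (Euc d)}
    (hB : B ∈ P.parts) {f g : Euc d → ℝ≥0∞} (hfg : EqOn g f B) (hg : ∀ x ∉ B, g x = 1)
    (h : ConvexOrderLE ((ρ.restrict B).withDensity f) (ν.restrict B)) :
    ConvexOrderLE (ρ.withDensity g) ν := by
  refine .of_finpartition hP (withDensity_absolutelyContinuous _ _ hρ) hν fun B' hB' ↦ ?_
  rw [restrict_withDensity (hP B' hB')]
  rcases eq_or_ne B' B with rfl | hne
  · rwa [withDensity_congr_ae (ae_restrict_of_forall_mem (hP B' hB') hfg)]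
  · have hone : g =ᵐ[ρ.restrict B'] 1 := ae_restrict_of_forall_mem (hP B' hB') fun x hx ↦
      hg x fun hxB ↦ disjoint_left.1 (P.disjoint hB' hB hne) hx hxB
    rw [withDensity_congr_ae hone, withDensity_one]
    exact hle B' hB'

theorem DensityRigid.restrict (h : DensityRigid ρ ν) {P : Finpartition D}
    (hP : ∀ B ∈ P.parts, MeasurableSet B) (hρ : ρ Dᶜ = 0) (hν : ν Dᶜ = 0)
    (hle : ∀ B ∈ P.parts, ConvexOrderLE (ρ.restrict B) (ν.restrict B)) {B : Set (Euc d)}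
    (hB : B ∈ P.parts) : DensityRigid (ρ.restrict B) (ν.restrict B) := by
  intro s hs hs₁ hplus hminus
  have hzero : B.indicator s =ᵐ[ρ] 0 := by
    refine h _ (hs.indicator (hP B hB)) (fun x ↦ ?_) ?_ ?_
    · exact (norm_indicator_le_norm_self s x).trans (hs₁ x)
    · exact .withDensity_of_restrict hP hρ hν hle hB (fun x hx ↦ by simp [hx])
        (fun x hx ↦ by simp [hx]) hplus
    · exact .withDensity_of_restrict hP hρ hν hle hB (fun x hx ↦ by simp [hx])
        (fun x hx ↦ by simp [hx]) hminus
  filter_upwards [ae_restrict_of_ae hzero, ae_restrict_mem (hP B hB)] with x hx hxB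
  simpa [hxB] using hx

end DensityRigid

theorem exists_pos_mul_norm_le_of_forall_pos {V : Type*} [NormedAddCommGroup V] [NormedSpace ℝ V]
    [FiniteDimensional ℝ V] {F : V → ℝ} (hF : Continuous F)
    (hsmul : ∀ c : ℝ, 0 ≤ c → ∀ v, F (c • v) = c * F v) (hpos : ∀ v ≠ 0, 0 < F v) :
    ∃ m > 0, ∀ v, m * ‖v‖ ≤ F v := by
  have := FiniteDimensional.proper ℝ V
  obtain ⟨m, hm, hle⟩ := (isCompact_sphere (0 : V) 1).exists_forall_le' hF.continuousOn (a := 0)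
    fun v hv ↦ hpos v (ne_zero_of_mem_unit_sphere ⟨v, hv⟩)
  refine ⟨m, hm, fun v ↦ ?_⟩
  rcases eq_or_ne v 0 with rfl | hv
  · simpa using (hsmul 0 le_rfl 0).ge
  · have hunit : ‖v‖⁻¹ • v ∈ Metric.sphere (0 : V) 1 := by simp [norm_smul, hv]
    calc m * ‖v‖ ≤ F (‖v‖⁻¹ • v) * ‖v‖ := by gcongr; exact hle _ hunit
      _ = F v := by
        rw [hsmul _ (by positivity)]
        field_simp

theorem exists_pos_mul_abs_le_of_forall_notMem {V : Type*} [NormedAddCommGroup V] [NormedSpace ℝ V]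
    [FiniteDimensional ℝ V] {F : V → ℝ} (hF : Continuous F)
    (hsmul : ∀ c : ℝ, 0 ≤ c → ∀ v, F (c • v) = c * F v) {K : Submodule ℝ V}
    (hK : ∀ k ∈ K, ∀ v, F (k + v) = F v) (hpos : ∀ v ∉ K, 0 < F v) {T : V →ₗ[ℝ] ℝ}
    (hT : K ≤ LinearMap.ker T) : ∃ ε > 0, ∀ v, ε * |T v| ≤ F v := by
  obtain ⟨W, hKW⟩ := K.exists_isCompl
  obtain ⟨m, hm, hle⟩ := exists_pos_mul_norm_le_of_forall_pos
    (F := fun w : W ↦ F w) (hF.comp continuous_subtype_val) (fun c hc w ↦ hsmul c hc w)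
    fun w hw ↦ hpos w fun hwK ↦ hw (Subtype.ext (Submodule.disjoint_def.1 hKW.disjoint w hwK w.2))
  let T' : W →L[ℝ] ℝ := (T ∘ₗ W.subtype).toContinuousLinearMap
  have hT' (w : W) : |T w| ≤ (‖T'‖ + 1) * ‖w‖ :=
    (T'.le_opNorm w).trans (by gcongr; exact (lt_add_one _).le)
  refine ⟨m / (‖T'‖ + 1), by positivity, fun v ↦ ?_⟩
  obtain ⟨k, hk, w, hw, rfl⟩ := Submodule.mem_sup.1 (hKW.sup_eq_top ▸ Submodule.mem_top (x := v))
  calc m / (‖T'‖ + 1) * |T (k + w)| = m / (‖T'‖ + 1) * |T w| := by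
        rw [map_add, hT hk, zero_add]
    _ ≤ m / (‖T'‖ + 1) * ((‖T'‖ + 1) * ‖w‖) := by gcongr; exact hT' ⟨w, hw⟩
    _ = m * ‖w‖ := by field_simp
    _ ≤ F (k + w) := (hle ⟨w, hw⟩).trans_eq (hK k hk w).symm

theorem integral_eq_sum_of_compl_null {α : Type*} [MeasurableSpace α] [MeasurableSingletonClass α]
    {ρ : Measure α} [IsFiniteMeasure ρ] {T : Finset α} (hT : ρ (T : Set α)ᶜ = 0) (f : α → ℝ) :
    ∫ x, f x ∂ρ = ∑ x : T, ρ.real {(x : α)} * f x := by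
  have hrestrict : ρ.restrict (T : Set α) = ρ := Measure.restrict_eq_self_of_ae_mem hT
  calc ∫ x, f x ∂ρ = ∫ x in (T : Set α), f x ∂ρ := by rw [hrestrict]
    _ = ∑ x ∈ T, ρ.real {x} * f x := setIntegral_finset T (.of_finite T.finite_toSet)
    _ = ∑ x : T, ρ.real {(x : α)} * f x := (Finset.sum_coe_sort T fun x ↦ ρ.real {x} * f x).symm

theorem isBounded_support_of_compl_null {X : Type*} [MetricSpace X] [MeasurableSpace X]
    {ρ : Measure X} {T : Finset X} (hT : ρ (T : Set X)ᶜ = 0) : IsBounded ρ.support :=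
  T.finite_toSet.isBounded.subset (Measure.support_subset_of_isClosed T.finite_toSet.isClosed hT)

section DiagonalPairing

variable {E : Type*} [NormedAddCommGroup E] [NormedSpace ℝ E] {T : Finset E}

/-- The functional `u ↦ ∑ₓ w(x) uₓ(x)` on families of affine functions indexed by a finite set of
points, each affine function being evaluated at its own index. -/
def diagonalPairing (T : Finset E) (w : E → ℝ) : (T → E →ᴬ[ℝ] ℝ) →ₗ[ℝ] ℝ where
  toFun u := ∑ x : T, w x * u x x
  map_add' u v := by simp [mul_add, Finset.sum_add_distrib]
  map_smul' c u := by simp [Finset.mul_sum, mul_left_comm]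

theorem diagonalPairing_apply (w : E → ℝ) (u : T → E →ᴬ[ℝ] ℝ) :
    diagonalPairing T w u = ∑ x : T, w x * u x x :=
  rfl

theorem diagonalPairing_const_eq_zero {w : E → ℝ} (hw : ∑ x ∈ T, w x = 0)
    (hwx : ∑ x ∈ T, w x • x = 0) (a : E →ᴬ[ℝ] ℝ) : diagonalPairing T w (fun _ ↦ a) = 0 := by
  have ha (x : E) : a x = a.contLinear x + a 0 := congr_fun a.decomp x
  calc diagonalPairing T w (fun _ ↦ a) = ∑ x ∈ T, w x * a x :=
        Finset.sum_coe_sort T fun x ↦ w x * a x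
    _ = ∑ x ∈ T, (a.contLinear (w x • x) + w x * a 0) :=
        Finset.sum_congr rfl fun x _ ↦ by rw [ha x, map_smul, smul_eq_mul, mul_add]
    _ = a.contLinear (∑ x ∈ T, w x • x) + (∑ x ∈ T, w x) * a 0 := by
        rw [Finset.sum_add_distrib, map_sum, Finset.sum_mul]
    _ = 0 := by rw [hw, hwx, map_zero, zero_mul, add_zero]

theorem exists_continuousAffineMap_le_of_lt {ψ : E → ℝ} (hψ : ConvexOn ℝ univ ψ)
    (hc : Continuous ψ) {x : E} {r : ℝ} (hr : r < ψ x) :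
    ∃ a : E →ᴬ[ℝ] ℝ, (∀ y, a y ≤ ψ y) ∧ a x = r := by
  obtain ⟨l, c, hle, heq⟩ := hψ.exists_affine_le_of_lt (𝕜 := ℝ) (mem_univ x) hr isClosed_univ
    (hc.lowerSemicontinuous.lowerSemicontinuousOn _)
  exact ⟨l.toContinuousAffineMap + .const ℝ E c, fun y ↦ hle ⟨y, mem_univ y⟩, heq⟩

theorem upperEnvelope_const_add {ι : Type*} [Finite ι] [Nonempty ι] (a : E →ᴬ[ℝ] ℝ)
    (u : ι → E →ᴬ[ℝ] ℝ) (y : E) :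
    upperEnvelope ((fun _ ↦ a) + u) y = a y + upperEnvelope u y := by
  simp only [upperEnvelope, Pi.add_apply, ContinuousAffineMap.coe_add]
  exact (add_ciSup (finite_range _).bddAbove _).symm

theorem upperEnvelope_smul {ι : Type*} {c : ℝ} (hc : 0 ≤ c) (u : ι → E →ᴬ[ℝ] ℝ) (y : E) :
    upperEnvelope (c • u) y = c * upperEnvelope u y :=
  (Real.mul_iSup_of_nonneg hc _).symm

end DiagonalPairing

section Duality

variable {d : ℕ} {ρ ν : Measure (Euc d)} [IsFiniteMeasure ρ] [IsFiniteMeasure ν]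
  {T : Finset (Euc d)}

theorem diagonalPairing_le_integral_upperEnvelope (hT : ρ (T : Set (Euc d))ᶜ = 0)
    (u : T → Euc d →ᴬ[ℝ] ℝ) :
    diagonalPairing T (fun x ↦ ρ.real {x}) u ≤ ∫ x, upperEnvelope u x ∂ρ := by
  rw [integral_eq_sum_of_compl_null hT, diagonalPairing_apply]
  gcongr with x
  exact le_upperEnvelope u x x

theorem convexOrderLE_of_forall_diagonalPairing_le [Nonempty T] (hν : IsBounded ν.support)
    (hT : ρ (T : Set (Euc d))ᶜ = 0)
    (h : ∀ u : T → Euc d →ᴬ[ℝ] ℝ,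
      diagonalPairing T (fun x ↦ ρ.real {x}) u ≤ ∫ y, upperEnvelope u y ∂ν) :
    ConvexOrderLE ρ ν := by
  intro ψ hψ hψν hψρ
  have hlower (δ : ℝ) (hδ : 0 < δ) : ∫ x, ψ x ∂ρ - δ * ρ.real univ ≤ ∫ y, ψ y ∂ν := by
    choose u hu_le hu_eq using fun x : T ↦ exists_continuousAffineMap_le_of_lt hψ
      hψ.locallyLipschitz.continuous (sub_lt_self (ψ x) hδ)
    calc ∫ x, ψ x ∂ρ - δ * ρ.real univ = ∫ x, (ψ x - δ) ∂ρ := by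
          rw [integral_sub hψρ (integrable_const δ), integral_const, smul_eq_mul, mul_comm]
      _ = diagonalPairing T (fun x ↦ ρ.real {x}) u := by
          simp_rw [integral_eq_sum_of_compl_null hT, diagonalPairing_apply, hu_eq]
      _ ≤ ∫ y, upperEnvelope u y ∂ν := h u
      _ ≤ ∫ y, ψ y ∂ν := integral_mono
          (integrable_of_convexOn_of_isBounded_support hν (convexOn_upperEnvelope u)) hψν
          fun y ↦ upperEnvelope_le fun x ↦ hu_le x y
  have hlim : Tendsto (fun δ : ℝ ↦ ∫ x, ψ x ∂ρ - δ * ρ.real univ) (𝓝[>] 0) (𝓝 (∫ x, ψ x ∂ρ)) := by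
    have hcont : Continuous fun δ : ℝ ↦ ∫ x, ψ x ∂ρ - δ * ρ.real univ := by fun_prop
    simpa using (hcont.tendsto 0).mono_left nhdsWithin_le_nhds
  exact le_of_tendsto hlim (eventually_mem_nhdsWithin.mono hlower)

theorem ConvexOrderLE.diagonalPairing_le [Nonempty T] (h : ConvexOrderLE ρ ν)
    (hν : IsBounded ν.support) (hT : ρ (T : Set (Euc d))ᶜ = 0) (u : T → Euc d →ᴬ[ℝ] ℝ) :
    diagonalPairing T (fun x ↦ ρ.real {x}) u ≤ ∫ y, upperEnvelope u y ∂ν :=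
  (diagonalPairing_le_integral_upperEnvelope hT u).trans
    (h.integral_le (isBounded_support_of_compl_null hT) hν (convexOn_upperEnvelope u))

theorem ConvexOrderLE.upperEnvelope_eq_of_diagonalPairing_eq [Nonempty T] (h : ConvexOrderLE ρ ν)
    (hν : IsBounded ν.support) (hT : ρ (T : Set (Euc d))ᶜ = 0) (hpos : ∀ x ∈ T, ρ {x} ≠ 0)
    {u : T → Euc d →ᴬ[ℝ] ℝ}
    (hu : diagonalPairing T (fun x ↦ ρ.real {x}) u = ∫ y, upperEnvelope u y ∂ν) :
    (∀ x : T, upperEnvelope u x = u x x) ∧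
      ∫ y, upperEnvelope u y ∂ρ = ∫ y, upperEnvelope u y ∂ν := by
  have hpairing := diagonalPairing_le_integral_upperEnvelope hT u
  have henvelope := h.integral_le (isBounded_support_of_compl_null hT) hν (convexOn_upperEnvelope u)
  have heq := henvelope.antisymm (hu ▸ hpairing)
  refine ⟨fun x ↦ ?_, heq⟩
  rw [← heq, integral_eq_sum_of_compl_null hT, diagonalPairing_apply, Finset.sum_eq_sum_iff_of_le
    fun x _ ↦ by gcongr; exact le_upperEnvelope u x x] at hu
  have hx : ρ.real {(x : Euc d)} ≠ 0 := (measureReal_ne_zero_iff).2 (hpos x x.2)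
  exact (mul_left_cancel₀ hx (hu x (Finset.mem_univ x))).symm

theorem ConvexOrderLE.exists_pos_mul_abs_diagonalPairing_le [Nonempty T] (h : ConvexOrderLE ρ ν)
    (hν : IsBounded ν.support) (hT : ρ (T : Set (Euc d))ᶜ = 0)
    (hconst : ∀ u : T → Euc d →ᴬ[ℝ] ℝ,
      diagonalPairing T (fun x ↦ ρ.real {x}) u = ∫ y, upperEnvelope u y ∂ν →
        (range u).Subsingleton)
    {w : Euc d → ℝ} (hw : ∑ x ∈ T, w x = 0) (hwx : ∑ x ∈ T, w x • x = 0) :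
    ∃ ε > 0, ∀ u : T → Euc d →ᴬ[ℝ] ℝ, ε * |diagonalPairing T w u| ≤
      ∫ y, upperEnvelope u y ∂ν - diagonalPairing T (fun x ↦ ρ.real {x}) u := by
  have hint {μ : Measure (Euc d)} [IsFiniteMeasure μ] (hμ : IsBounded μ.support)
      (u : T → Euc d →ᴬ[ℝ] ℝ) : Integrable (upperEnvelope u) μ :=
    integrable_of_convexOn_of_isBounded_support hμ (convexOn_upperEnvelope u)
  refine exists_pos_mul_abs_le_of_forall_notMem
    (K := LinearMap.range (LinearMap.pi fun _ : T ↦ LinearMap.id)) ?_ ?_ ?_ ?_ ?_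
  · exact (continuous_integral_upperEnvelope hν).sub
      (diagonalPairing T fun x ↦ ρ.real {x}).continuous_of_finiteDimensional
  · intro c hc u
    simp_rw [upperEnvelope_smul hc, integral_const_mul, map_smul, smul_eq_mul, mul_sub]
  · rintro _ ⟨a, rfl⟩ u
    have ha : diagonalPairing T (fun x ↦ ρ.real {x}) (fun _ ↦ a) = ∫ y, a y ∂ν :=
      (integral_eq_sum_of_compl_null hT a).symm.trans
        (h.integral_continuousAffineMap_eq (isBounded_support_of_compl_null hT) hν a)
    have henvelope : ∫ y, upperEnvelope ((fun _ ↦ a) + u) y ∂ν =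
        ∫ y, a y ∂ν + ∫ y, upperEnvelope u y ∂ν := by
      simp_rw [upperEnvelope_const_add]
      exact integral_add (integrable_of_continuous_of_isBounded_support hν a.continuous) (hint hν u)
    change ∫ y, upperEnvelope ((fun _ ↦ a) + u) y ∂ν - diagonalPairing T _ ((fun _ ↦ a) + u) = _
    rw [henvelope, map_add, ha, add_sub_add_left_eq_sub]
  · intro u hu
    refine sub_pos.2 ((h.diagonalPairing_le hν hT u).lt_of_ne fun heq ↦ hu ?_)
    obtain ⟨x₀⟩ := ‹Nonempty T›
    exact ⟨u x₀, funext fun x ↦ hconst u heq (mem_range_self x₀) (mem_range_self x)⟩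
  · rintro _ ⟨a, rfl⟩
    exact diagonalPairing_const_eq_zero hw hwx a

theorem convexOrderLE_withDensity_of_forall_abs_diagonalPairing_le [Nonempty T]
    (hν : IsBounded ν.support) (hT : ρ (T : Set (Euc d))ᶜ = 0) {s : Euc d → ℝ}
    (hs : Measurable s) (hs₁ : ∀ x, |s x| ≤ 1)
    (h : ∀ u : T → Euc d →ᴬ[ℝ] ℝ, |diagonalPairing T (fun x ↦ ρ.real {x} * s x) u| ≤
      ∫ y, upperEnvelope u y ∂ν - diagonalPairing T (fun x ↦ ρ.real {x}) u) :
    ConvexOrderLE (ρ.withDensity fun x ↦ .ofReal (1 + s x)) ν := by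
  have hs_int : Integrable s ρ := .of_bound hs.aestronglyMeasurable 1 (.of_forall hs₁)
  have := isFiniteMeasure_withDensity_ofReal ((integrable_const (1 : ℝ)).add hs_int).2
  refine convexOrderLE_of_forall_diagonalPairing_le hν
    (withDensity_absolutelyContinuous _ _ hT) fun u ↦ ?_
  have hatom (x : Euc d) : (ρ.withDensity fun x ↦ .ofReal (1 + s x)).real {x} =
      ρ.real {x} + ρ.real {x} * s x := by
    rw [Measure.real, withDensity_apply _ (measurableSet_singleton x), lintegral_singleton,
      ENNReal.toReal_mul, ENNReal.toReal_ofReal (by linarith [neg_le_of_abs_le (hs₁ x)]),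
      ← Measure.real]
    ring
  calc diagonalPairing T (fun x ↦ (ρ.withDensity fun x ↦ .ofReal (1 + s x)).real {x}) u
    _ = diagonalPairing T (fun x ↦ ρ.real {x}) u +
          diagonalPairing T (fun x ↦ ρ.real {x} * s x) u := by
        simp_rw [hatom, diagonalPairing_apply, add_mul, Finset.sum_add_distrib]
    _ ≤ ∫ y, upperEnvelope u y ∂ν := by linarith [le_of_abs_le (h u)]

theorem exists_measurable_affine_relation_of_not_affineIndependent (hpos : ∀ x ∈ T, ρ {x} ≠ 0)
    (hT : ¬AffineIndependent ℝ ((↑) : T → Euc d)) :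
    ∃ s : Euc d → ℝ, Measurable s ∧ (∀ x, |s x| ≤ 1) ∧ ∑ x ∈ T, ρ.real {x} * s x = 0 ∧
      ∑ x ∈ T, (ρ.real {x} * s x) • x = 0 ∧ ∃ x ∈ T, s x ≠ 0 := by
  obtain ⟨w, hwx, hw, z, hz, hwz⟩ := exists_nontrivial_relation_sum_zero_of_not_affine_ind hT
  have hreal {x : Euc d} (hx : x ∈ T) : ρ.real {x} ≠ 0 := (measureReal_ne_zero_iff).2 (hpos x hx)
  let M : ℝ := ∑ x ∈ T, |w x / ρ.real {x}|
  have hle {x : Euc d} (hx : x ∈ T) : |w x / ρ.real {x}| ≤ M :=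
    Finset.single_le_sum (f := fun x ↦ |w x / ρ.real {x}|) (fun _ _ ↦ abs_nonneg _) hx
  have hM : 0 < M := (abs_pos.2 (div_ne_zero hwz (hreal hz))).trans_le (hle hz)
  let s : Euc d → ℝ := (T : Set (Euc d)).indicator fun x ↦ w x / ρ.real {x} / M
  have hs {x : Euc d} (hx : x ∈ T) : ρ.real {x} * s x = M⁻¹ * w x := by
    have := hreal hx
    simp only [s, indicator_of_mem (Finset.mem_coe.2 hx)]
    field_simp
  refine ⟨s, ?_, fun x ↦ ?_, ?_, ?_, z, hz, ?_⟩
  · refine measurable_const.measurable_of_countable_ne (f := fun _ ↦ 0)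
      (T.countable_toSet.mono fun x hx ↦ ?_)
    exact mem_of_indicator_ne_zero (Ne.symm hx)
  · by_cases hx : x ∈ T
    · simp only [s, indicator_of_mem (Finset.mem_coe.2 hx), abs_div _ M, abs_of_pos hM]
      exact (div_le_one hM).2 (hle hx)
    · simp [s, hx]
  · rw [Finset.sum_congr rfl fun x ↦ hs, ← Finset.mul_sum, hw, mul_zero]
  · rw [Finset.sum_congr rfl fun x hx ↦ by rw [hs hx, mul_smul], ← Finset.smul_sum, hwx, smul_zero]
  · exact right_ne_zero_of_mul (hs hz ▸ mul_ne_zero (inv_ne_zero hM.ne') hwz)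

theorem ConvexOrderLE.exists_withDensity_of_not_affineIndependent (h : ConvexOrderLE ρ ν)
    (hν : IsBounded ν.support) (hT : ρ (T : Set (Euc d))ᶜ = 0) (hpos : ∀ x ∈ T, ρ {x} ≠ 0)
    (hTdep : ¬AffineIndependent ℝ ((↑) : T → Euc d))
    (hconst : ∀ u : T → Euc d →ᴬ[ℝ] ℝ,
      diagonalPairing T (fun x ↦ ρ.real {x}) u = ∫ y, upperEnvelope u y ∂ν →
        (range u).Subsingleton) :
    ∃ s : Euc d → ℝ, Measurable s ∧ (∀ x, |s x| ≤ 1) ∧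
      ConvexOrderLE (ρ.withDensity fun x ↦ .ofReal (1 + s x)) ν ∧
      ConvexOrderLE (ρ.withDensity fun x ↦ .ofReal (1 - s x)) ν ∧ ∃ x ∈ T, s x ≠ 0 := by
  obtain ⟨s, hs, hs₁, hsum, hsumx, z, hz, hsz⟩ :=
    exists_measurable_affine_relation_of_not_affineIndependent hpos hTdep
  have : Nonempty T := ⟨z, hz⟩
  obtain ⟨ε, hε, hle⟩ := h.exists_pos_mul_abs_diagonalPairing_le hν hT hconst hsum hsumx
  have hbound {t : ℝ} (ht : |t| ≤ min ε 1) (x : Euc d) : |t * s x| ≤ 1 := by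
    rw [abs_mul]
    exact mul_le_one₀ (ht.trans (min_le_right _ _)) (abs_nonneg _) (hs₁ x)
  have hperturb {t : ℝ} (ht : |t| ≤ min ε 1) :
      ConvexOrderLE (ρ.withDensity fun x ↦ .ofReal (1 + t * s x)) ν := by
    refine convexOrderLE_withDensity_of_forall_abs_diagonalPairing_le hν hT (hs.const_mul t)
      (hbound ht) fun u ↦ ?_
    have hscale : diagonalPairing T (fun x ↦ ρ.real {x} * (t * s x)) u =
        t * diagonalPairing T (fun x ↦ ρ.real {x} * s x) u := by
      simp_rw [diagonalPairing_apply, Finset.mul_sum, mul_left_comm (ρ.real _) t, mul_assoc]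
    rw [hscale, abs_mul]
    exact (mul_le_mul_of_nonneg_right (ht.trans (min_le_left _ _)) (abs_nonneg _)).trans (hle u)
  have hc : 0 < min ε 1 := lt_min hε one_pos
  have hc_abs : |min ε 1| ≤ min ε 1 := (abs_of_pos hc).le
  refine ⟨fun x ↦ min ε 1 * s x, hs.const_mul _, hbound hc_abs, hperturb hc_abs, ?_, z, hz,
    mul_ne_zero hc.ne' hsz⟩
  simpa only [neg_mul, ← sub_eq_add_neg] using hperturb ((abs_neg _).trans_le hc_abs)

theorem DensityRigid.exists_contact (hrigid : DensityRigid ρ ν)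
    (h : ConvexOrderLE ρ ν) (hν : IsBounded ν.support) (hT : ρ (T : Set (Euc d))ᶜ = 0)
    (hpos : ∀ x ∈ T, ρ {x} ≠ 0) (hTdep : ¬AffineIndependent ℝ ((↑) : T → Euc d)) :
    ∃ u : T → Euc d →ᴬ[ℝ] ℝ, (range u).Nontrivial ∧ (∀ x : T, upperEnvelope u x = u x x) ∧
      ∫ y, upperEnvelope u y ∂ρ = ∫ y, upperEnvelope u y ∂ν := by
  have : Nonempty T := not_isEmpty_iff.1 fun _ ↦ hTdep (affineIndependent_of_subsingleton ℝ _)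
  by_contra! hno
  have hconst (u : T → Euc d →ᴬ[ℝ] ℝ)
      (hu : diagonalPairing T (fun x ↦ ρ.real {x}) u = ∫ y, upperEnvelope u y ∂ν) :
      (range u).Subsingleton := by
    obtain ⟨hcontact, heq⟩ := h.upperEnvelope_eq_of_diagonalPairing_eq hν hT hpos hu
    exact not_nontrivial_iff.1 fun hne ↦ hno u hne hcontact heq
  obtain ⟨s, hs, hs₁, hplus, hminus, z, hz, hsz⟩ :=
    h.exists_withDensity_of_not_affineIndependent hν hT hpos hTdep hconst
  have hzero := hrigid s hs hs₁ hplus hminus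
  exact hpos z hz (measure_mono_null (singleton_subset_iff.2 hsz) (ae_iff.1 hzero))

end Duality

theorem mem_support_iff_measure_singleton_ne_zero {X : Type*} [TopologicalSpace X] [T1Space X]
    [HereditarilyLindelofSpace X] [MeasurableSpace X] {ρ : Measure X} (hfin : ρ.support.Finite)
    {x : X} : x ∈ ρ.support ↔ ρ {x} ≠ 0 := by
  refine ⟨fun hx hzero ↦ ?_, fun hx ↦ (Measure.mem_support_iff_forall x).2 fun U hU ↦
    (pos_iff_ne_zero.2 hx).trans_le (measure_mono (singleton_subset_iff.2 (mem_of_mem_nhds hU)))⟩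
  have hU : (ρ.support \ {x})ᶜ ∈ 𝓝 x := hfin.sdiff.isClosed.isOpen_compl.mem_nhds (by simp)
  refine ((Measure.mem_support_iff_forall x).1 hx _ hU).ne' ?_
  refine measure_mono_null (fun y hy ↦ ?_) (measure_union_null hzero Measure.measure_compl_support)
  by_cases hyx : y = x
  · exact .inl hyx
  · exact .inr fun hys ↦ hy ⟨hys, hyx⟩

theorem support_restrict_ssubset {X : Type*} [TopologicalSpace X] [T1Space X]
    [HereditarilyLindelofSpace X] [MeasurableSpace X] [MeasurableSingletonClass X] {ρ : Measure X}
    (hfin : ρ.support.Finite) {B : Set X} {x : X} (hxB : x ∉ B) (hx : ρ {x} ≠ 0) :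
    (ρ.restrict B).support ⊂ ρ.support := by
  have hsub : (ρ.restrict B).support ⊆ ρ.support := Measure.support_mono Measure.restrict_le_self
  refine (ssubset_iff_of_subset hsub).2
    ⟨x, (mem_support_iff_measure_singleton_ne_zero hfin).2 hx, fun hxs ↦ ?_⟩
  refine (mem_support_iff_measure_singleton_ne_zero (hfin.subset hsub)).1 hxs ?_
  simp [Measure.restrict_apply, hxB]

section Splitting

variable {d : ℕ} {D : Set (Euc d)} {ρ ν : Measure (Euc d)} [IsFiniteMeasure ρ] [IsFiniteMeasure ν]

theorem DensityRigid.exists_finpartition_support_ssubset (hrigid : DensityRigid ρ ν)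
    (h : ConvexOrderLE ρ ν) (hν : IsBounded ν.support)
    (hnull : ∀ S : AffineSubspace ℝ (Euc d), S ≠ ⊤ → ν S = 0) (hD : Convex ℝ D)
    (hDm : MeasurableSet D) (hρD : ρ Dᶜ = 0) (hνD : ν Dᶜ = 0) (hfin : ρ.support.Finite)
    (hdep : ¬AffineIndependent ℝ ((↑) : ρ.support → Euc d)) :
    ∃ P : Finpartition D, ∀ B ∈ P.parts, Convex ℝ B ∧ MeasurableSet B ∧
      ConvexOrderLE (ρ.restrict B) (ν.restrict B) ∧ (ρ.restrict B).support ⊂ ρ.support := by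
  obtain ⟨T, hT⟩ := hfin.exists_finset_coe
  have hatom (x : Euc d) : x ∈ T ↔ ρ {x} ≠ 0 := by
    rw [← mem_support_iff_measure_singleton_ne_zero hfin, ← hT, Finset.mem_coe]
  rw [← hT] at hdep
  obtain ⟨u, hne, hcontact, heq⟩ := hrigid.exists_contact h hν
    (hT ▸ Measure.measure_compl_support) (fun x ↦ (hatom x).1) hdep
  have henvelope : upperEnvelope ((↑) : range u → Euc d →ᴬ[ℝ] ℝ) = upperEnvelope u :=
    funext fun y ↦ iSup_range' (fun a : Euc d →ᴬ[ℝ] ℝ ↦ a y) u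
  have : Nontrivial (range u) := nontrivial_coe_sort.2 hne
  obtain ⟨P, hP⟩ := h.exists_finpartition_of_contact hfin.isBounded hν hnull hD hDm hρD hνD
    (u := ((↑) : range u → Euc d →ᴬ[ℝ] ℝ)) Subtype.val_injective (henvelope ▸ heq) (by
      rintro ⟨_, x, rfl⟩
      exact ⟨x, (hatom x).1 x.2, henvelope ▸ hcontact x⟩)
  refine ⟨P, fun B hB ↦ ?_⟩
  obtain ⟨hBconv, hBm, hle, x, hxB, hx⟩ := hP B hB
  exact ⟨hBconv, hBm, hle, support_restrict_ssubset hfin hxB hx⟩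

theorem DensityRigid.exists_finpartition_affineIndependent (hrigid : DensityRigid ρ ν)
    (h : ConvexOrderLE ρ ν) (hν : IsBounded ν.support)
    (hnull : ∀ S : AffineSubspace ℝ (Euc d), S ≠ ⊤ → ν S = 0) (hD : Convex ℝ D)
    (hDm : MeasurableSet D) (hρD : ρ Dᶜ = 0) (hνD : ν Dᶜ = 0) (hfin : ρ.support.Finite) :
    ∃ P : Finpartition D, ∀ B ∈ P.parts, Convex ℝ B ∧
      ConvexOrderLE (ρ.restrict B) (ν.restrict B) ∧
      AffineIndependent ℝ ((↑) : (ρ.restrict B).support → Euc d) := by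
  induction hn : ρ.support.ncard using Nat.strong_induction_on generalizing D ρ ν with
  | _ n ih =>
  by_cases hind : AffineIndependent ℝ ((↑) : ρ.support → Euc d)
  · refine ⟨.ofErase {D} (Finset.supIndep_singleton _ _) Finset.sup_singleton, fun B hB ↦ ?_⟩
    obtain rfl : B = D := Finset.mem_singleton.1 (Finset.mem_of_mem_erase hB)
    rw [Measure.restrict_eq_self_of_ae_mem hρD, Measure.restrict_eq_self_of_ae_mem hνD]
    exact ⟨hD, h, hind⟩
  · obtain ⟨P, hP⟩ := hrigid.exists_finpartition_support_ssubset h hν hnull hD hDm hρD hνD hfin hind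
    choose hconv hmeas hle hssub using hP
    choose Q hQ using fun B (hB : B ∈ P.parts) ↦
      ih (ρ.restrict B).support.ncard (hn ▸ ncard_lt_ncard (hssub B hB) hfin)
        (hrigid.restrict hmeas hρD hνD hle hB) (hle B hB)
        (hν.subset (Measure.support_mono Measure.restrict_le_self))
        (fun S hS ↦ Measure.restrict_le_self.absolutelyContinuous (hnull S hS)) (hconv B hB)
        (hmeas B hB) (by simp [Measure.restrict_apply (hmeas B hB).compl])
        (by simp [Measure.restrict_apply (hmeas B hB).compl]) (hfin.subset (hssub B hB).subset) rfl
    refine ⟨P.bind Q, fun C hC ↦ ?_⟩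
    obtain ⟨B, hB, hCQ⟩ := Finpartition.mem_bind.1 hC
    have hCB : C ⊆ B := (Q B hB).le hCQ
    have hC := hQ B hB C hCQ
    rwa [Measure.restrict_restrict_of_subset hCB, Measure.restrict_restrict_of_subset hCB] at hC

end Splitting

theorem msupport_eq_support {d : ℕ} (ρ : Measure (Euc d)) : msupport ρ = ρ.support := by
  ext x
  simp [msupport, Measure.mem_support_iff_forall, pos_iff_ne_zero]

theorem extreme_point_finite_support_partition_general {d : ℕ} {D : Set (Euc d)}
    (hD : MeasurableSet D) (hDconv : Convex ℝ D) {ν : Measure (Euc d)} [IsProbabilityMeasure ν]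
    (hνD : ν Dᶜ = 0) (hν : IsBounded ν.support)
    (hnull : ∀ S : AffineSubspace ℝ (Euc d), S ≠ ⊤ → ν S = 0) {ρ : Measure (Euc d)}
    (hρ : ρ ∈ fusions D ν)
    (hext : ∀ w ∈ fusions D ν, ∀ z ∈ fusions D ν, ∀ a : ℝ, 0 < a → a < 1 →
      ρ = ENNReal.ofReal a • w + ENNReal.ofReal (1 - a) • z → w = z)
    (hfin : (msupport ρ).Finite) :
    ∃ P : Finset (Set (Euc d)),
      (∀ B ∈ P, Convex ℝ B) ∧
      (⋃ B ∈ P, B) = D ∧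
      ((P : Set (Set (Euc d))).Pairwise fun B B' ↦ Disjoint B B') ∧
      ∀ B ∈ P, ConvexOrderLE (ρ.restrict B) (ν.restrict B) ∧
        AffineIndependent ℝ (fun x : msupport (ρ.restrict B) ↦ (x : Euc d)) := by
  have := hρ.1
  rw [msupport_eq_support] at hfin
  obtain ⟨P, hP⟩ := (densityRigid_of_extreme hρ hext).exists_finpartition_affineIndependent
    hρ.2.2 hν hnull hDconv hD hρ.2.1 hνD hfin
  refine ⟨P.parts, fun B hB ↦ (hP B hB).1, biUnion_finpartition_parts P, P.disjoint, fun B hB ↦ ?_⟩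
  rw [msupport_eq_support]
  exact (hP B hB).2

/-- Kleiner et al.: if `ρ` is an extreme point of the set of fusions `F_ν` of
an absolutely continuous probability measure `ν` on a compact convex `D ⊆ ℝ^d`, and `ρ` has
finite support, then there is a finite partition of `D` into convex sets `B` such that on each
`B` the restriction `ρ|_B` is dominated by `ν|_B` in the convex order and has affinely
independent support. -/
theorem extreme_point_finite_support_partition
    {d : ℕ} (D : Set (Euc d)) (hD : IsCompact D) (hDconv : Convex ℝ D)
    (ν : Measure (Euc d)) [IsProbabilityMeasure ν] (hνD : ν Dᶜ = 0)
    (hac : ν ≪ (volume : Measure (Euc d)))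
    (ρ : Measure (Euc d)) (hρ : ρ ∈ fusions D ν)
    (hext : ∀ w ∈ fusions D ν, ∀ z ∈ fusions D ν, ∀ a : ℝ, 0 < a → a < 1 →
      ρ = ENNReal.ofReal a • w + ENNReal.ofReal (1 - a) • z → w = z)
    (hfin : (msupport ρ).Finite) :
    ∃ P : Finset (Set (Euc d)),
      (∀ B ∈ P, Convex ℝ B) ∧
      (⋃ B ∈ P, B) = D ∧
      ((P : Set (Set (Euc d))).Pairwise fun B B' => Disjoint B B') ∧
      ∀ B ∈ P, ConvexOrderLE (ρ.restrict B) (ν.restrict B) ∧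
        AffineIndependent ℝ (fun x : msupport (ρ.restrict B) => (x : Euc d)) :=
  extreme_point_finite_support_partition_general hD.measurableSet hDconv hνD
    (hD.isBounded.subset (Measure.support_subset_of_isClosed hD.isClosed hνD))
    (fun S hS ↦ hac (Measure.addHaar_affineSubspace _ S hS)) hρ hext hfin
end
end

section
/- Let D ⊂ ℝ^d be compact and convex, ν a probability measure on D absolutely continuous with respect to Lebesgue measure with bounded density, Φ ∈ C(D), and η > 0. Then for every given number of sites l ∈ ℕ there exists n ≤ l such that the penalized functional F_n^η(X,g) = F_n(X,g) − η R_n(X,g) admits a maximizer (X*,g*) over n-tuples of pairwise distinct sites and weight vectors, with m_i[X*,g*] > 0 for all i = 1,…,n, and F_n^η(X*,g*) ≥ sup_{(X,g)} F_l^η(X,g). -/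
open MeasureTheory Set Filter Topology
open scoped ENNReal NNReal

noncomputable section

/-- ν-mass of the `i`-th Laguerre cell. -/
def cellMass {d n : ℕ} (D : Set (Euc d)) (ν : Measure (Euc d)) (X : Fin n → Euc d)
    (g : Fin n → ℝ) (i : Fin n) : ℝ :=
  (ν (LaguerreCell D X g i)).toReal

/-- ν-barycenter of the `i`-th Laguerre cell. -/
def cellBary {d n : ℕ} (D : Set (Euc d)) (ν : Measure (Euc d)) (X : Fin n → Euc d)
    (g : Fin n → ℝ) (i : Fin n) : Euc d :=
  (cellMass D ν X g i)⁻¹ • ∫ y in LaguerreCell D X g i, y ∂ν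

/-- The objective `F_n[X,g] = Σ_{i : m_i > 0} m_i[X,g] Φ(b_i[X,g])`. -/
def Fn {d n : ℕ} (D : Set (Euc d)) (ν : Measure (Euc d)) (Φ : Euc d → ℝ)
    (X : Fin n → Euc d) (g : Fin n → ℝ) : ℝ :=
  ∑ i, if 0 < cellMass D ν X g i then cellMass D ν X g i * Φ (cellBary D ν X g i) else 0

/-- The penalty term `R_n[X,g]`. -/
def Rn {d n : ℕ} (D : Set (Euc d)) (ν : Measure (Euc d))
    (X : Fin n → Euc d) (g : Fin n → ℝ) : ℝ :=
  (∑ i, if 0 < cellMass D ν X g i then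
      ∫ y in LaguerreCell D X g i, ‖y - X i‖ ^ 2 ∂ν else 0)
  + ∑ i, ∑ j, if i ≠ j ∧ 0 < cellMass D ν X g i ∧ 0 < cellMass D ν X g j then
      cellMass D ν X g i * cellMass D ν X g j / ‖X i - X j‖ ^ 2 else 0

/-- The penalized objective `F_n^η = F_n - η R_n`. -/
def Fη {d n : ℕ} (D : Set (Euc d)) (ν : Measure (Euc d)) (Φ : Euc d → ℝ) (η : ℝ)
    (X : Fin n → Euc d) (g : Fin n → ℝ) : ℝ :=
  Fn D ν Φ X g - η * Rn D ν X g

/-!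
Follow an ultrafilter along which `F_l^η` tends to its supremum. Since `F_l` is bounded above, the
penalty stays bounded along it. For every cell whose mass does not vanish in the limit, the second
moment in the penalty then keeps the site bounded, the repulsion keeps these sites apart, and the
weight differences are bounded because the cells are non-empty. The surviving sites and weights
therefore converge, after normalizing the weights by an additive constant, to a configuration of
`n ≤ l` distinct sites. Bisectors are null sets, so the surviving cell integrals converge: `F`
passes to the limit and the penalty can only drop with the discarded terms. Hence the limit value
is at least `sup F_l^η`. If `n = l` the limit is the maximizer; if `n < l`, repeat with `n` sites.
-/

section General

lemma exists_ultrafilter_tendsto_ciSup {ι α : Type*} [Nonempty ι]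
    [ConditionallyCompleteLinearOrder α] [TopologicalSpace α] [OrderTopology α]
    {f : ι → α} (hf : BddAbove (range f)) :
    ∃ U : Ultrafilter ι, Tendsto f U (𝓝 (⨆ i, f i)) := by
  have hmem : (⨆ i, f i) ∈ closure (range f) :=
    (isLUB_ciSup hf).mem_closure (range_nonempty f)
  rw [mem_closure_iff_clusterPt, ← image_univ, ← map_principal] at hmem
  obtain ⟨U, -, hU⟩ := mapClusterPt_iff_ultrafilter.1 hmem
  exact ⟨U, hU⟩

lemma tendsto_zero_or_exists_eventually_le {ι : Type*} (U : Ultrafilter ι) {f : ι → ℝ}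
    (hf : ∀ t, 0 ≤ f t) : Tendsto f U (𝓝 0) ∨ ∃ δ > 0, ∀ᶠ t in U, δ ≤ f t := by
  refine or_iff_not_imp_right.2 fun h ↦ tendsto_order.2 ⟨fun a ha ↦ ?_, fun δ hδ ↦ ?_⟩
  · exact Eventually.of_forall fun t ↦ ha.trans_le (hf t)
  · have hlow : ¬∀ᶠ t in U, δ ≤ f t := fun hle ↦ h ⟨δ, hδ, hle⟩
    simpa only [not_le] using Ultrafilter.eventually_not.2 hlow

lemma exists_tendsto_of_eventually_norm_le {ι E : Type*} [SeminormedAddCommGroup E]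
    [ProperSpace E] (U : Ultrafilter ι) {f : ι → E} {r : ℝ} (h : ∀ᶠ t in U, ‖f t‖ ≤ r) :
    ∃ a, Tendsto f U (𝓝 a) := by
  have hball : Metric.closedBall (0 : E) r ∈ U.map f :=
    h.mono fun t ht ↦ mem_closedBall_zero_iff.2 ht
  obtain ⟨a, -, ha⟩ := (isCompact_closedBall (0 : E) r).ultrafilter_le_nhds' _ hball
  exact ⟨a, ha⟩

lemma sum_comp_embedding_le_sum {ι κ : Type*} [Fintype ι] [Fintype κ] (e : ι ↪ κ) {f : κ → ℝ}
    (hf : ∀ i, 0 ≤ f i) : ∑ j, f (e j) ≤ ∑ i, f i := by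
  simpa only [Finset.sum_map] using Finset.sum_le_univ_sum_of_nonneg (s := Finset.univ.map e) hf

lemma tendsto_sum_of_tendsto_comp_embedding {T ι κ M : Type*} [Fintype ι] [Fintype κ]
    [AddCommMonoid M] [TopologicalSpace M] [ContinuousAdd M] {𝓕 : Filter T} (e : ι ↪ κ)
    {f : κ → T → M} {a : ι → M} (hf : ∀ j, Tendsto (f (e j)) 𝓕 (𝓝 (a j)))
    (hzero : ∀ i ∉ range e, Tendsto (f i) 𝓕 (𝓝 0)) :
    Tendsto (fun t ↦ ∑ i, f i t) 𝓕 (𝓝 (∑ j, a j)) := by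
  classical
  have hrest : Tendsto (fun t ↦ ∑ i ∈ (Finset.univ.map e)ᶜ, f i t) 𝓕 (𝓝 0) := by
    simpa only [Finset.sum_const_zero] using
      tendsto_finsetSum _ fun i hi ↦ hzero i (by simpa using hi)
  have hsum := (tendsto_finsetSum Finset.univ fun j _ ↦ hf j).add hrest
  rw [add_zero] at hsum
  refine hsum.congr fun t ↦ ?_
  rw [← Finset.sum_add_sum_compl (Finset.univ.map e), Finset.sum_map]

end General

section Hyperplanes

variable {E : Type*} [NormedAddCommGroup E] [InnerProductSpace ℝ E] [MeasurableSpace E]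

/-- `ν` gives no mass to affine hyperplanes, encoded as level sets of `⟪v, ·⟫` with `v ≠ 0`.
For such measures, Laguerre cells of distinct sites meet in null sets. -/
def ChargesNoHyperplane (ν : Measure E) : Prop :=
  ∀ v : E, v ≠ 0 → ∀ c : ℝ, ν {y | inner ℝ v y = c} = 0

namespace ChargesNoHyperplane

lemma of_isAddHaarMeasure [BorelSpace E] [FiniteDimensional ℝ E] (μ : Measure E)
    [μ.IsAddHaarMeasure] : ChargesNoHyperplane μ := by
  intro v hv c
  have hvv : inner ℝ v v ≠ 0 := inner_self_ne_zero.2 hv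
  have hker : LinearMap.ker (innerₛₗ ℝ v) ≠ ⊤ := fun h ↦
    hvv (LinearMap.mem_ker.1 (h ▸ Submodule.mem_top : v ∈ LinearMap.ker (innerₛₗ ℝ v)))
  have htranslate : {y | inner ℝ v y = c} =
      (fun y ↦ y - (c / inner ℝ v v) • v) ⁻¹' (LinearMap.ker (innerₛₗ ℝ v) : Set E) := by
    ext y
    simp [inner_sub_right, inner_smul_right, sub_eq_zero, hv]
  rw [htranslate]
  simpa only [sub_eq_add_neg, measure_preimage_add_right] using
    Measure.addHaar_submodule μ _ hker

lemma mono_ac {μ ν : Measure E} (hμ : ChargesNoHyperplane μ) (hνμ : ν ≪ μ) :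
    ChargesNoHyperplane ν :=
  fun v hv c ↦ hνμ (hμ v hv c)

lemma measure_bisector_eq_zero {ν : Measure E} (hν : ChargesNoHyperplane ν) {a b : E}
    (hab : a ≠ b) (s t : ℝ) : ν {y | ‖y - a‖ ^ 2 - s = ‖y - b‖ ^ 2 - t} = 0 := by
  refine measure_mono_null (fun y hy ↦ ?_)
    (hν (b - a) (sub_ne_zero.2 hab.symm) ((‖b‖ ^ 2 - ‖a‖ ^ 2 + s - t) / 2))
  simp only [mem_ofPred_eq, norm_sub_sq_real, inner_sub_left, real_inner_comm y] at hy ⊢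
  linarith

end ChargesNoHyperplane

end Hyperplanes

section LaguerreCells

variable {d k n : ℕ} {D : Set (Euc d)} {X : Fin n → Euc d} {g : Fin n → ℝ} {i j : Fin n}

lemma laguerreCell_subset : LaguerreCell D X g i ⊆ D := fun _ hy ↦ hy.1

lemma isCompact_laguerreCell (hD : IsCompact D) : IsCompact (LaguerreCell D X g i) := by
  have hcell : LaguerreCell D X g i =
      D ∩ ⋂ j, {y | ‖y - X i‖ ^ 2 - g i ≤ ‖y - X j‖ ^ 2 - g j} := by
    ext y; simp [LaguerreCell]
  rw [hcell]
  exact hD.inter_right <| isClosed_iInter fun j ↦ isClosed_le (by fun_prop) (by fun_prop)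

lemma measurableSet_laguerreCell (hD : IsCompact D) : MeasurableSet (LaguerreCell D X g i) :=
  (isCompact_laguerreCell hD).measurableSet

lemma laguerreCell_add_const (c : ℝ) :
    LaguerreCell D X (fun j ↦ g j + c) i = LaguerreCell D X g i := by
  ext y
  simp only [LaguerreCell, mem_ofPred_eq, ← sub_sub, sub_le_sub_iff_right]

lemma laguerreCell_of_subsingleton [Subsingleton (Fin n)] : LaguerreCell D X g i = D := by
  ext y
  simp only [LaguerreCell, mem_ofPred_eq, Subsingleton.elim _ i, le_refl, implies_true, and_true]

lemma exists_mem_laguerreCell [Nonempty (Fin n)] (X : Fin n → Euc d) (g : Fin n → ℝ) {y : Euc d}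
    (hy : y ∈ D) : ∃ i, y ∈ LaguerreCell D X g i := by
  obtain ⟨i, hi⟩ := Finite.exists_min fun j ↦ ‖y - X j‖ ^ 2 - g j
  exact ⟨i, hy, hi⟩

lemma laguerreCell_subset_comp (e : Fin n → Fin k) (X : Fin k → Euc d) (g : Fin k → ℝ) :
    LaguerreCell D X g (e j) ⊆ LaguerreCell D (X ∘ e) (g ∘ e) j :=
  fun _ hy ↦ ⟨hy.1, fun i ↦ hy.2 (e i)⟩

lemma laguerreCell_comp_sdiff_subset (e : Fin n ↪ Fin k) (X : Fin k → Euc d) (g : Fin k → ℝ) :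
    LaguerreCell D (X ∘ e) (g ∘ e) j \ LaguerreCell D X g (e j) ⊆
      ⋃ i ∈ (Finset.univ.map e)ᶜ, LaguerreCell D X g i := by
  rintro y ⟨hyB, hyA⟩
  have : Nonempty (Fin k) := ⟨e j⟩
  obtain ⟨i, hi⟩ := exists_mem_laguerreCell X g hyB.1
  refine mem_iUnion₂.2 ⟨i, Finset.mem_compl.2 fun hmem ↦ ?_, hi⟩
  obtain ⟨j', -, rfl⟩ := Finset.mem_map.1 hmem
  exact hyA ⟨hyB.1, fun i' ↦ (hyB.2 j').trans (hi.2 i')⟩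

lemma weight_sub_le_of_laguerreCell_nonempty {ρ r : ℝ} (hρ : ∀ y ∈ D, ‖y‖ ≤ ρ)
    (hr : ‖X i‖ ≤ r) (hj : (LaguerreCell D X g j).Nonempty) : g i - g j ≤ (ρ + r) ^ 2 := by
  obtain ⟨y, hyD, hy⟩ := hj
  have hnorm : ‖y - X i‖ ≤ ρ + r := (norm_sub_le _ _).trans (add_le_add (hρ y hyD) hr)
  calc g i - g j ≤ ‖y - X i‖ ^ 2 - ‖y - X j‖ ^ 2 := by linarith [hy i]
    _ ≤ ‖y - X i‖ ^ 2 := sub_le_self _ (sq_nonneg _)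
    _ ≤ (ρ + r) ^ 2 := by gcongr

lemma eventually_mem_laguerreCell_iff {y : Euc d}
    (hy : ∀ i ≠ j, ‖y - X j‖ ^ 2 - g j ≠ ‖y - X i‖ ^ 2 - g i) :
    ∀ᶠ p : (Fin n → Euc d) × (Fin n → ℝ) in 𝓝 (X, g),
      (y ∈ LaguerreCell D p.1 p.2 j ↔ y ∈ LaguerreCell D X g j) := by
  have hcont (i : Fin n) : Tendsto (fun p : (Fin n → Euc d) × (Fin n → ℝ) ↦
      ‖y - p.1 i‖ ^ 2 - p.2 i) (𝓝 (X, g)) (𝓝 (‖y - X i‖ ^ 2 - g i)) :=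
    Continuous.tendsto (by fun_prop) (X, g)
  have hcompare (i : Fin n) : ∀ᶠ p : (Fin n → Euc d) × (Fin n → ℝ) in 𝓝 (X, g),
      (‖y - p.1 j‖ ^ 2 - p.2 j ≤ ‖y - p.1 i‖ ^ 2 - p.2 i ↔
        ‖y - X j‖ ^ 2 - g j ≤ ‖y - X i‖ ^ 2 - g i) := by
    rcases eq_or_ne i j with rfl | hij
    · simp
    rcases (hy i hij).lt_or_gt with hlt | hgt
    · filter_upwards [(hcont j).eventually_lt (hcont i) hlt] with p hp
      exact iff_of_true hp.le hlt.le
    · filter_upwards [(hcont i).eventually_lt (hcont j) hgt] with p hp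
      exact iff_of_false hp.not_ge hgt.not_ge
  filter_upwards [eventually_all.2 hcompare] with p hp
  exact and_congr_right fun _ ↦ forall_congr' hp

end LaguerreCells

section CellIntegrals

variable {d n : ℕ} {D : Set (Euc d)} {ν : Measure (Euc d)} {X : Fin n → Euc d} {g : Fin n → ℝ}

lemma ChargesNoHyperplane.ae_sq_norm_sub_ne (hν : ChargesNoHyperplane ν)
    (hX : Function.Injective X) (j : Fin n) :
    ∀ᵐ y ∂ν, ∀ i ≠ j, ‖y - X j‖ ^ 2 - g j ≠ ‖y - X i‖ ^ 2 - g i := by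
  simp only [ae_all_iff]
  exact fun i hij ↦ compl_mem_ae_iff.2 (hν.measure_bisector_eq_zero (hX.ne hij.symm) _ _)

lemma continuousAt_setIntegral_laguerreCell [IsFiniteMeasureOnCompacts ν] (hD : IsCompact D)
    (hν : ChargesNoHyperplane ν) {E : Type*} [NormedAddCommGroup E] [NormedSpace ℝ E]
    {f : Euc d → Euc d → E} (hf : Continuous (Function.uncurry f)) (hX : Function.Injective X)
    (j : Fin n) :
    ContinuousAt (fun p : (Fin n → Euc d) × (Fin n → ℝ) ↦
      ∫ y in LaguerreCell D p.1 p.2 j, f (p.1 j) y ∂ν) (X, g) := by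
  obtain ⟨K, hK⟩ :=
    ((isCompact_closedBall (X j) 1).prod hD).exists_bound_of_continuousOn hf.continuousOn
  have hsite : ∀ᶠ p : (Fin n → Euc d) × (Fin n → ℝ) in 𝓝 (X, g),
      p.1 j ∈ Metric.closedBall (X j) 1 :=
    ((continuous_apply j).comp continuous_fst).tendsto (X, g)
      (Metric.closedBall_mem_nhds _ one_pos)
  simp only [ContinuousAt, ← integral_indicator (measurableSet_laguerreCell hD)]
  refine tendsto_integral_filter_of_dominated_convergence (D.indicator fun _ ↦ K)
    (.of_forall fun p ↦ ?_) ?_ ?_ ?_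
  · exact (hf.uncurry_left (p.1 j)).aestronglyMeasurable.indicator (measurableSet_laguerreCell hD)
  · filter_upwards [hsite] with p hp
    refine .of_forall fun y ↦ ?_
    calc ‖(LaguerreCell D p.1 p.2 j).indicator (f (p.1 j)) y‖
        = (LaguerreCell D p.1 p.2 j).indicator (fun y ↦ ‖f (p.1 j) y‖) y :=
          norm_indicator_eq_indicator_norm _ _
      _ ≤ D.indicator (fun y ↦ ‖f (p.1 j) y‖) y :=
          indicator_le_indicator_of_subset laguerreCell_subset (fun _ ↦ norm_nonneg _) y
      _ ≤ D.indicator (fun _ ↦ K) y :=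
          indicator_le_indicator' fun hyD ↦ hK (p.1 j, y) ⟨hp, hyD⟩
  · exact (integrable_indicator_iff hD.measurableSet).2
      (continuousOn_const.integrableOn_compact hD)
  · filter_upwards [hν.ae_sq_norm_sub_ne hX j] with y hy
    have hfy : Tendsto (fun p : (Fin n → Euc d) × (Fin n → ℝ) ↦ f (p.1 j) y) (𝓝 (X, g))
        (𝓝 (f (X j) y)) :=
      Continuous.tendsto (hf.comp (by fun_prop : Continuous fun p :
        (Fin n → Euc d) × (Fin n → ℝ) ↦ (p.1 j, y))) (X, g)
    by_cases hyj : y ∈ LaguerreCell D X g j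
    · rw [indicator_of_mem hyj]
      refine hfy.congr' ?_
      filter_upwards [eventually_mem_laguerreCell_iff hy] with p hp
      rw [indicator_of_mem (hp.2 hyj)]
    · rw [indicator_of_notMem hyj]
      refine tendsto_const_nhds.congr' ?_
      filter_upwards [eventually_mem_laguerreCell_iff hy] with p hp
      rw [indicator_of_notMem (mt hp.1 hyj)]

end CellIntegrals

section CellMass

variable {d n : ℕ} {D : Set (Euc d)} {ν : Measure (Euc d)} {X : Fin n → Euc d} {g : Fin n → ℝ}
  {i j : Fin n}

lemma cellMass_nonneg : 0 ≤ cellMass D ν X g i := ENNReal.toReal_nonneg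

lemma cellMass_eq_setIntegral_one :
    cellMass D ν X g i = ∫ _ in LaguerreCell D X g i, (1 : ℝ) ∂ν := by
  simp [cellMass, Measure.real]

lemma laguerreCell_nonempty_of_cellMass_pos (hm : 0 < cellMass D ν X g i) :
    (LaguerreCell D X g i).Nonempty :=
  nonempty_of_measure_ne_zero (ENNReal.toReal_pos_iff.1 hm).1.ne'

lemma cellMass_le_measureReal [IsFiniteMeasureOnCompacts ν] (hD : IsCompact D) :
    cellMass D ν X g i ≤ ν.real D :=
  measureReal_mono laguerreCell_subset hD.measure_ne_top

lemma measureReal_le_sum_cellMass [Nonempty (Fin n)] [IsFiniteMeasureOnCompacts ν]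
    (hD : IsCompact D) (X : Fin n → Euc d) (g : Fin n → ℝ) :
    ν.real D ≤ ∑ i, cellMass D ν X g i := by
  have hcover : D ⊆ ⋃ i, LaguerreCell D X g i := fun _ hy ↦
    mem_iUnion.2 (exists_mem_laguerreCell X g hy)
  have hfinite : ν (⋃ i, LaguerreCell D X g i) ≠ ⊤ :=
    measure_ne_top_of_subset (iUnion_subset fun _ ↦ laguerreCell_subset) hD.measure_ne_top
  exact (measureReal_mono hcover hfinite).trans (measureReal_iUnion_fintype_le _)

lemma cellBary_mem [IsFiniteMeasureOnCompacts ν] (hD : IsCompact D) (hDconv : Convex ℝ D)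
    (hm : 0 < cellMass D ν X g i) : cellBary D ν X g i ∈ D := by
  obtain ⟨hpos, hfinite⟩ := ENNReal.toReal_pos_iff.1 hm
  have havg : ⨍ y in LaguerreCell D X g i, y ∂ν ∈ D :=
    hDconv.set_average_mem hD.isClosed hpos.ne' hfinite.ne
      ((ae_restrict_mem (measurableSet_laguerreCell hD)).mono fun _ hy ↦ hy.1)
      (continuousOn_id.integrableOn_compact (isCompact_laguerreCell hD))
  rwa [setAverage_eq] at havg

end CellMass

section Objective

variable {d n : ℕ} {D : Set (Euc d)} {ν : Measure (Euc d)} {Φ : Euc d → ℝ} {X : Fin n → Euc d}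
  {g : Fin n → ℝ}

lemma Fn_eq_sum : Fn D ν Φ X g = ∑ i, cellMass D ν X g i * Φ (cellBary D ν X g i) := by
  refine Finset.sum_congr rfl fun i _ ↦ ite_eq_left_iff.2 fun hm ↦ ?_
  rw [le_antisymm (not_lt.1 hm) cellMass_nonneg, zero_mul]

lemma norm_cellMass_mul_le [IsFiniteMeasureOnCompacts ν] (hD : IsCompact D)
    (hDconv : Convex ℝ D) {M : ℝ} (hM : ∀ y ∈ D, ‖Φ y‖ ≤ M) (i : Fin n) :
    ‖cellMass D ν X g i * Φ (cellBary D ν X g i)‖ ≤ cellMass D ν X g i * M := by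
  rw [norm_mul, Real.norm_of_nonneg cellMass_nonneg]
  rcases cellMass_nonneg.eq_or_lt with hm | hm
  · rw [← hm, zero_mul, zero_mul]
  · exact mul_le_mul_of_nonneg_left (hM _ (cellBary_mem hD hDconv hm)) cellMass_nonneg

lemma exists_forall_Fn_le [IsFiniteMeasureOnCompacts ν] (hD : IsCompact D)
    (hDconv : Convex ℝ D) (hΦ : ContinuousOn Φ D) (n : ℕ) :
    ∃ B, ∀ (X : Fin n → Euc d) (g : Fin n → ℝ), Fn D ν Φ X g ≤ B := by
  obtain ⟨M, hM⟩ := hD.exists_bound_of_continuousOn hΦ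
  refine ⟨∑ _ : Fin n, ν.real D * |M|, fun X g ↦ ?_⟩
  rw [Fn_eq_sum]
  refine Finset.sum_le_sum fun i _ ↦ (le_abs_self _).trans ?_
  calc |cellMass D ν X g i * Φ (cellBary D ν X g i)|
      ≤ cellMass D ν X g i * |M| :=
        norm_cellMass_mul_le hD hDconv (fun y hy ↦ (hM y hy).trans (le_abs_self M)) i
    _ ≤ ν.real D * |M| :=
        mul_le_mul_of_nonneg_right (cellMass_le_measureReal hD) (abs_nonneg M)

end Objective

section Penalty

variable {d n : ℕ} {D : Set (Euc d)} {ν : Measure (Euc d)} {X : Fin n → Euc d} {g : Fin n → ℝ}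
  {i j : Fin n}

/-- Second moment of the `i`-th Laguerre cell about its site: the transport term of `Rn`. -/
def cellMoment (D : Set (Euc d)) (ν : Measure (Euc d)) (X : Fin n → Euc d) (g : Fin n → ℝ)
    (i : Fin n) : ℝ :=
  ∫ y in LaguerreCell D X g i, ‖y - X i‖ ^ 2 ∂ν

/-- Repulsion energy between the `i`-th and `j`-th sites: the term of `Rn` that keeps sites
apart. It vanishes for `i = j`, by the convention `x / 0 = 0`. -/
def siteRepulsion (D : Set (Euc d)) (ν : Measure (Euc d)) (X : Fin n → Euc d) (g : Fin n → ℝ)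
    (i j : Fin n) : ℝ :=
  cellMass D ν X g i * cellMass D ν X g j / ‖X i - X j‖ ^ 2

lemma cellMoment_nonneg : 0 ≤ cellMoment D ν X g i := integral_nonneg fun _ ↦ sq_nonneg _

lemma siteRepulsion_nonneg : 0 ≤ siteRepulsion D ν X g i j :=
  div_nonneg (mul_nonneg cellMass_nonneg cellMass_nonneg) (sq_nonneg _)

lemma Rn_eq_sum [IsFiniteMeasureOnCompacts ν] (hD : IsCompact D) :
    Rn D ν X g = (∑ i, cellMoment D ν X g i) + ∑ i, ∑ j, siteRepulsion D ν X g i j := by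
  have hzero (i : Fin n) (hm : ¬0 < cellMass D ν X g i) : cellMass D ν X g i = 0 :=
    le_antisymm (not_lt.1 hm) cellMass_nonneg
  refine congrArg₂ (· + ·) (Finset.sum_congr rfl fun i _ ↦ ite_eq_left_iff.2 fun hm ↦ ?_)
    (Finset.sum_congr rfl fun i _ ↦ Finset.sum_congr rfl fun j _ ↦ ite_eq_left_iff.2 fun hm ↦ ?_)
  · have hnull : ν (LaguerreCell D X g i) = 0 :=
      (measureReal_eq_zero_iff (isCompact_laguerreCell hD).measure_ne_top).1 (hzero i hm)
    rw [setIntegral_measure_zero _ hnull]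
  · by_cases hij : i = j
    · simp [hij]
    · rcases not_and_or.1 fun h ↦ hm ⟨hij, h⟩ with hi | hj
      · simp [hzero i hi]
      · simp [hzero j hj]

lemma Rn_nonneg [IsFiniteMeasureOnCompacts ν] (hD : IsCompact D) : 0 ≤ Rn D ν X g := by
  rw [Rn_eq_sum hD]
  exact add_nonneg (Fintype.sum_nonneg fun _ ↦ cellMoment_nonneg)
    (Fintype.sum_nonneg fun _ ↦ Fintype.sum_nonneg fun _ ↦ siteRepulsion_nonneg)

lemma cellMoment_le_Rn [IsFiniteMeasureOnCompacts ν] (hD : IsCompact D) (i : Fin n) :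
    cellMoment D ν X g i ≤ Rn D ν X g := by
  rw [Rn_eq_sum hD]
  exact le_add_of_le_of_nonneg
    (Finset.single_le_sum (f := cellMoment D ν X g) (fun _ _ ↦ cellMoment_nonneg)
      (Finset.mem_univ i))
    (Fintype.sum_nonneg fun _ ↦ Fintype.sum_nonneg fun _ ↦ siteRepulsion_nonneg)

lemma siteRepulsion_le_Rn [IsFiniteMeasureOnCompacts ν] (hD : IsCompact D) (i j : Fin n) :
    siteRepulsion D ν X g i j ≤ Rn D ν X g := by
  rw [Rn_eq_sum hD]
  refine le_add_of_nonneg_of_le (Fintype.sum_nonneg fun _ ↦ cellMoment_nonneg) ?_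
  calc siteRepulsion D ν X g i j ≤ ∑ j, siteRepulsion D ν X g i j :=
        Finset.single_le_sum (f := siteRepulsion D ν X g i)
          (fun _ _ ↦ siteRepulsion_nonneg) (Finset.mem_univ j)
    _ ≤ ∑ i, ∑ j, siteRepulsion D ν X g i j :=
        Finset.single_le_sum (f := fun i ↦ ∑ j, siteRepulsion D ν X g i j)
          (fun _ _ ↦ Fintype.sum_nonneg fun _ ↦ siteRepulsion_nonneg) (Finset.mem_univ i)

lemma cellMass_mul_cellMass_le [IsFiniteMeasureOnCompacts ν] (hD : IsCompact D) (hij : X i ≠ X j) :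
    cellMass D ν X g i * cellMass D ν X g j ≤ Rn D ν X g * ‖X i - X j‖ ^ 2 :=
  (div_le_iff₀ (pow_pos (norm_sub_pos_iff.2 hij) 2)).1 (siteRepulsion_le_Rn hD i j)

lemma norm_site_le [IsFiniteMeasureOnCompacts ν] (hD : IsCompact D) {ρ δ R : ℝ}
    (hρ : ∀ y ∈ D, ‖y‖ ≤ ρ) (hδ : 0 < δ) (hm : δ ≤ cellMass D ν X g i)
    (hR : Rn D ν X g ≤ R) : ‖X i‖ ≤ ρ + √(R / δ) := by
  have hpos : 0 < cellMass D ν X g i := hδ.trans_le hm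
  obtain ⟨hνpos, hνfinite⟩ := ENNReal.toReal_pos_iff.1 hpos
  have hint : IntegrableOn (fun y ↦ ‖y - X i‖ ^ 2) (LaguerreCell D X g i) ν :=
    ContinuousOn.integrableOn_compact (isCompact_laguerreCell hD) (by fun_prop)
  obtain ⟨y, hy, hle⟩ := exists_le_setAverage hνpos.ne' hνfinite.ne hint
  have hsq : ‖y - X i‖ ^ 2 ≤ R / δ :=
    calc ‖y - X i‖ ^ 2 ≤ cellMoment D ν X g i / cellMass D ν X g i := by
          rwa [setAverage_eq, smul_eq_mul, inv_mul_eq_div] at hle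
      _ ≤ R / δ := by
          have hmoment := (cellMoment_le_Rn hD i).trans hR
          exact div_le_div₀ (cellMoment_nonneg.trans hmoment) hmoment hδ hm
  calc ‖X i‖ = ‖y - (y - X i)‖ := by rw [sub_sub_cancel]
    _ ≤ ‖y‖ + ‖y - X i‖ := norm_sub_le _ _
    _ ≤ ρ + √(R / δ) := add_le_add (hρ y hy.1) (Real.le_sqrt_of_sq_le hsq)

end Penalty

section LaguerreLimit

variable {d k n : ℕ} {D : Set (Euc d)} {ν : Measure (Euc d)} {Φ : Euc d → ℝ}

/-- The configurations `(X t, g t)` of `k` sites converge along `𝓕` to the configuration `(Y, h)`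
of `n` distinct sites, where `e` selects the surviving sites and the masses of all others vanish in
the limit. Only differences of weights are required to converge, because adding a constant to all
weights does not change the cells. -/
structure IsLaguerreLimit {T : Type*} (D : Set (Euc d)) (ν : Measure (Euc d)) (𝓕 : Filter T)
    (X : T → Fin k → Euc d) (g : T → Fin k → ℝ) (e : Fin n ↪ Fin k)
    (Y : Fin n → Euc d) (h : Fin n → ℝ) : Prop where
  injective : Function.Injective Y
  tendsto_site : ∀ j, Tendsto (fun t ↦ X t (e j)) 𝓕 (𝓝 (Y j))
  tendsto_weight_sub : ∀ i j, Tendsto (fun t ↦ g t (e i) - g t (e j)) 𝓕 (𝓝 (h i - h j))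
  tendsto_cellMass_zero : ∀ i ∉ range e, Tendsto (fun t ↦ cellMass D ν (X t) (g t) i) 𝓕 (𝓝 0)

lemma norm_setIntegral_comp_sub_le [IsFiniteMeasureOnCompacts ν] (hD : IsCompact D)
    {E : Type*} [NormedAddCommGroup E] [NormedSpace ℝ E] {f : Euc d → E} {K : ℝ}
    (hf : IntegrableOn f D ν) (hK₀ : 0 ≤ K) (hK : ∀ y ∈ D, ‖f y‖ ≤ K) (e : Fin n ↪ Fin k)
    (X : Fin k → Euc d) (g : Fin k → ℝ) (j : Fin n) :
    ‖(∫ y in LaguerreCell D (X ∘ e) (g ∘ e) j, f y ∂ν) - ∫ y in LaguerreCell D X g (e j), f y ∂ν‖ ≤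
      K * ∑ i ∈ (Finset.univ.map e)ᶜ, cellMass D ν X g i := by
  set S := LaguerreCell D (X ∘ e) (g ∘ e) j \ LaguerreCell D X g (e j)
  have hSD : S ⊆ D := sdiff_subset.trans laguerreCell_subset
  have hcover : S ⊆ ⋃ i ∈ (Finset.univ.map e)ᶜ, LaguerreCell D X g i :=
    laguerreCell_comp_sdiff_subset e X g
  have hfinite : ν (⋃ i ∈ (Finset.univ.map e)ᶜ, LaguerreCell D X g i) ≠ ⊤ :=
    measure_ne_top_of_subset (iUnion₂_subset fun _ _ ↦ laguerreCell_subset) hD.measure_ne_top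
  rw [← setIntegral_sdiff (measurableSet_laguerreCell hD) (hf.mono_set laguerreCell_subset)
    (laguerreCell_subset_comp e X g)]
  calc ‖∫ y in S, f y ∂ν‖ ≤ K * ν.real S :=
        norm_setIntegral_le_of_norm_le_const
          ((measure_mono hSD).trans_lt hD.measure_lt_top) fun y hy ↦ hK y (hSD hy)
    _ ≤ K * ∑ i ∈ (Finset.univ.map e)ᶜ, cellMass D ν X g i :=
        mul_le_mul_of_nonneg_left
          ((measureReal_mono hcover hfinite).trans (measureReal_biUnion_finset_le _ _)) hK₀

namespace IsLaguerreLimit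

variable {T : Type*} {𝓕 : Filter T} {X : T → Fin k → Euc d} {g : T → Fin k → ℝ}
  {e : Fin n ↪ Fin k} {Y : Fin n → Euc d} {h : Fin n → ℝ}

section SetIntegral

variable {E : Type*} [NormedAddCommGroup E] [NormedSpace ℝ E] {f : Euc d → Euc d → E}

lemma tendsto_setIntegral_comp [IsFiniteMeasureOnCompacts ν]
    (hlim : IsLaguerreLimit D ν 𝓕 X g e Y h) (hD : IsCompact D) (hν : ChargesNoHyperplane ν)
    (hf : Continuous (Function.uncurry f)) (j : Fin n) :
    Tendsto (fun t ↦ ∫ y in LaguerreCell D (X t ∘ e) (g t ∘ e) j, f (X t (e j)) y ∂ν) 𝓕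
      (𝓝 (∫ y in LaguerreCell D Y h j, f (Y j) y ∂ν)) := by
  have hweights : Tendsto (fun t i ↦ g t (e i) + (h j - g t (e j))) 𝓕 (𝓝 h) :=
    tendsto_pi_nhds.2 fun i ↦ by
      simpa [add_sub, sub_add_eq_add_sub] using (hlim.tendsto_weight_sub i j).add_const (h j)
  have hconfig : Tendsto (fun t ↦ (X t ∘ e, fun i ↦ g t (e i) + (h j - g t (e j)))) 𝓕
      (𝓝 (Y, h)) :=
    (tendsto_pi_nhds.2 hlim.tendsto_site).prodMk_nhds hweights
  refine ((continuousAt_setIntegral_laguerreCell hD hν hf hlim.injective j).tendsto.comp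
    hconfig).congr fun t ↦ ?_
  exact congrArg (fun L ↦ ∫ y in L, f (X t (e j)) y ∂ν) (laguerreCell_add_const _)

lemma tendsto_setIntegral [IsFiniteMeasureOnCompacts ν]
    (hlim : IsLaguerreLimit D ν 𝓕 X g e Y h) (hD : IsCompact D) (hν : ChargesNoHyperplane ν)
    (hf : Continuous (Function.uncurry f)) (j : Fin n) :
    Tendsto (fun t ↦ ∫ y in LaguerreCell D (X t) (g t) (e j), f (X t (e j)) y ∂ν) 𝓕
      (𝓝 (∫ y in LaguerreCell D Y h j, f (Y j) y ∂ν)) := by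
  obtain ⟨K, hK⟩ :=
    ((isCompact_closedBall (Y j) 1).prod hD).exists_bound_of_continuousOn hf.continuousOn
  have hlost : Tendsto
      (fun t ↦ |K| * ∑ i ∈ (Finset.univ.map e)ᶜ, cellMass D ν (X t) (g t) i) 𝓕 (𝓝 0) := by
    simpa using (tendsto_finsetSum (Finset.univ.map e)ᶜ fun i hi ↦
      hlim.tendsto_cellMass_zero i (by simpa using hi)).const_mul |K|
  have hdiff : Tendsto (fun t ↦ (∫ y in LaguerreCell D (X t ∘ e) (g t ∘ e) j, f (X t (e j)) y ∂ν) -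
      ∫ y in LaguerreCell D (X t) (g t) (e j), f (X t (e j)) y ∂ν) 𝓕 (𝓝 0) := by
    refine squeeze_zero_norm' ?_ hlost
    filter_upwards [hlim.tendsto_site j (Metric.closedBall_mem_nhds _ one_pos)] with t ht
    exact norm_setIntegral_comp_sub_le hD
      ((hf.uncurry_left _).continuousOn.integrableOn_compact hD) (abs_nonneg K)
      (fun y hy ↦ (hK (X t (e j), y) ⟨ht, hy⟩).trans (le_abs_self K)) e (X t) (g t) j
  simpa using (hlim.tendsto_setIntegral_comp hD hν hf j).sub hdiff

end SetIntegral

variable [IsFiniteMeasureOnCompacts ν]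

lemma tendsto_cellMass (hlim : IsLaguerreLimit D ν 𝓕 X g e Y h) (hD : IsCompact D)
    (hν : ChargesNoHyperplane ν) (j : Fin n) :
    Tendsto (fun t ↦ cellMass D ν (X t) (g t) (e j)) 𝓕 (𝓝 (cellMass D ν Y h j)) := by
  simp only [cellMass_eq_setIntegral_one]
  exact hlim.tendsto_setIntegral hD hν (f := fun _ _ ↦ (1 : ℝ)) continuous_const j

lemma tendsto_cellBary (hlim : IsLaguerreLimit D ν 𝓕 X g e Y h) (hD : IsCompact D)
    (hν : ChargesNoHyperplane ν) {j : Fin n} (hm : 0 < cellMass D ν Y h j) :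
    Tendsto (fun t ↦ cellBary D ν (X t) (g t) (e j)) 𝓕 (𝓝 (cellBary D ν Y h j)) :=
  ((hlim.tendsto_cellMass hD hν j).inv₀ hm.ne').smul
    (hlim.tendsto_setIntegral hD hν (f := fun _ y ↦ y) continuous_snd j)

lemma tendsto_cellMoment (hlim : IsLaguerreLimit D ν 𝓕 X g e Y h) (hD : IsCompact D)
    (hν : ChargesNoHyperplane ν) (j : Fin n) :
    Tendsto (fun t ↦ cellMoment D ν (X t) (g t) (e j)) 𝓕 (𝓝 (cellMoment D ν Y h j)) :=
  hlim.tendsto_setIntegral hD hν (f := fun x y ↦ ‖y - x‖ ^ 2)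
    (by unfold Function.uncurry; fun_prop) j

lemma tendsto_siteRepulsion (hlim : IsLaguerreLimit D ν 𝓕 X g e Y h) (hD : IsCompact D)
    (hν : ChargesNoHyperplane ν) (i j : Fin n) :
    Tendsto (fun t ↦ siteRepulsion D ν (X t) (g t) (e i) (e j)) 𝓕
      (𝓝 (siteRepulsion D ν Y h i j)) := by
  rcases eq_or_ne i j with rfl | hij
  · simp only [siteRepulsion, sub_self, norm_zero, ne_eq, OfNat.ofNat_ne_zero, not_false_eq_true,
      zero_pow, div_zero, tendsto_const_nhds]
  · have hsep : ‖Y i - Y j‖ ^ 2 ≠ 0 :=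
      (pow_pos (norm_sub_pos_iff.2 (hlim.injective.ne hij)) 2).ne'
    exact ((hlim.tendsto_cellMass hD hν i).mul (hlim.tendsto_cellMass hD hν j)).div
      (((hlim.tendsto_site i).sub (hlim.tendsto_site j)).norm.pow 2) hsep

lemma tendsto_Fn (hlim : IsLaguerreLimit D ν 𝓕 X g e Y h) (hD : IsCompact D)
    (hDconv : Convex ℝ D) (hν : ChargesNoHyperplane ν) (hΦ : ContinuousOn Φ D) :
    Tendsto (fun t ↦ Fn D ν Φ (X t) (g t)) 𝓕 (𝓝 (Fn D ν Φ Y h)) := by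
  obtain ⟨M, hM⟩ := hD.exists_bound_of_continuousOn hΦ
  have hvanish (i : Fin k) (hi : Tendsto (fun t ↦ cellMass D ν (X t) (g t) i) 𝓕 (𝓝 0)) :
      Tendsto (fun t ↦ cellMass D ν (X t) (g t) i * Φ (cellBary D ν (X t) (g t) i)) 𝓕 (𝓝 0) :=
    squeeze_zero_norm (fun t ↦ norm_cellMass_mul_le hD hDconv hM i)
      (by simpa using hi.mul_const M)
  simp only [Fn_eq_sum]
  refine tendsto_sum_of_tendsto_comp_embedding e (fun j ↦ ?_)
    fun i hi ↦ hvanish i (hlim.tendsto_cellMass_zero i hi)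
  have hmass := hlim.tendsto_cellMass hD hν j
  rcases (cellMass_nonneg (D := D) (ν := ν) (X := Y) (g := h) (i := j)).eq_or_lt with hm | hm
  · rw [← hm] at hmass ⊢
    simpa using hvanish (e j) hmass
  · have hbary : Tendsto (fun t ↦ cellBary D ν (X t) (g t) (e j)) 𝓕
        (𝓝[D] cellBary D ν Y h j) := by
      refine tendsto_nhdsWithin_iff.2 ⟨hlim.tendsto_cellBary hD hν hm, ?_⟩
      filter_upwards [hmass.eventually_const_lt hm] with t ht
      exact cellBary_mem hD hDconv ht
    exact hmass.mul ((hΦ _ (cellBary_mem hD hDconv hm)).tendsto.comp hbary)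

lemma Rn_le_of_tendsto [𝓕.NeBot] (hlim : IsLaguerreLimit D ν 𝓕 X g e Y h) (hD : IsCompact D)
    (hν : ChargesNoHyperplane ν) {r : ℝ} (hr : Tendsto (fun t ↦ Rn D ν (X t) (g t)) 𝓕 (𝓝 r)) :
    Rn D ν Y h ≤ r := by
  have hsurviving : Tendsto (fun t ↦ (∑ j, cellMoment D ν (X t) (g t) (e j)) +
      ∑ i, ∑ j, siteRepulsion D ν (X t) (g t) (e i) (e j)) 𝓕 (𝓝 (Rn D ν Y h)) := by
    rw [Rn_eq_sum hD]
    exact (tendsto_finsetSum _ fun j _ ↦ hlim.tendsto_cellMoment hD hν j).add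
      (tendsto_finsetSum _ fun i _ ↦ tendsto_finsetSum _ fun j _ ↦
        hlim.tendsto_siteRepulsion hD hν i j)
  refine le_of_tendsto_of_tendsto' hsurviving hr fun t ↦ ?_
  rw [Rn_eq_sum hD]
  refine add_le_add (sum_comp_embedding_le_sum e fun _ ↦ cellMoment_nonneg) ?_
  calc ∑ i, ∑ j, siteRepulsion D ν (X t) (g t) (e i) (e j)
      ≤ ∑ i, ∑ j, siteRepulsion D ν (X t) (g t) (e i) j :=
        Finset.sum_le_sum fun i _ ↦ sum_comp_embedding_le_sum e fun _ ↦ siteRepulsion_nonneg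
    _ ≤ ∑ i, ∑ j, siteRepulsion D ν (X t) (g t) i j :=
        sum_comp_embedding_le_sum e (f := fun i ↦ ∑ j, siteRepulsion D ν (X t) (g t) i j)
          fun _ ↦ Fintype.sum_nonneg fun _ ↦ siteRepulsion_nonneg

lemma le_Fη_of_tendsto [𝓕.NeBot] (hlim : IsLaguerreLimit D ν 𝓕 X g e Y h) (hD : IsCompact D)
    (hDconv : Convex ℝ D) (hν : ChargesNoHyperplane ν) (hΦ : ContinuousOn Φ D) {η v : ℝ}
    (hη : 0 < η) (hv : Tendsto (fun t ↦ Fη D ν Φ η (X t) (g t)) 𝓕 (𝓝 v)) :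
    v ≤ Fη D ν Φ η Y h := by
  have hpenalty : Tendsto (fun t ↦ Rn D ν (X t) (g t)) 𝓕 (𝓝 ((Fn D ν Φ Y h - v) / η)) := by
    refine (((hlim.tendsto_Fn hD hDconv hν hΦ).sub hv).div_const η).congr fun t ↦ ?_
    rw [Fη, sub_sub_cancel, mul_div_cancel_left₀ _ hη.ne']
  have hle := (le_div_iff₀' hη).1 (hlim.Rn_le_of_tendsto hD hν hpenalty)
  rw [Fη]
  linarith

end IsLaguerreLimit

end LaguerreLimit

section Existence

variable {d k n : ℕ} {D : Set (Euc d)} {ν : Measure (Euc d)}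

lemma exists_tendsto_weight_sub {T : Type*} (U : Ultrafilter T) {X : T → Fin k → Euc d}
    {g : T → Fin k → ℝ} {i j : Fin k} {ρ r : ℝ} (hρ : ∀ y ∈ D, ‖y‖ ≤ ρ)
    (hi : ∀ᶠ t in U, ‖X t i‖ ≤ r) (hj : ∀ᶠ t in U, ‖X t j‖ ≤ r)
    (hmi : ∀ᶠ t in U, 0 < cellMass D ν (X t) (g t) i)
    (hmj : ∀ᶠ t in U, 0 < cellMass D ν (X t) (g t) j) :
    ∃ a, Tendsto (fun t ↦ g t i - g t j) U (𝓝 a) := by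
  refine exists_tendsto_of_eventually_norm_le U (r := (ρ + r) ^ 2) ?_
  filter_upwards [hi, hj, hmi, hmj] with t hti htj htmi htmj
  refine abs_sub_le_iff.2 ⟨?_, ?_⟩
  · exact weight_sub_le_of_laguerreCell_nonempty hρ hti
      (laguerreCell_nonempty_of_cellMass_pos htmj)
  · exact weight_sub_le_of_laguerreCell_nonempty hρ htj
      (laguerreCell_nonempty_of_cellMass_pos htmi)

variable [IsFiniteMeasureOnCompacts ν]

lemma exists_surviving_cells [Nonempty (Fin k)] {T : Type*} (U : Ultrafilter T) (hD : IsCompact D)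
    (hνD : ν D ≠ 0) (X : T → Fin k → Euc d) (g : T → Fin k → ℝ) :
    ∃ n, 0 < n ∧ ∃ e : Fin n ↪ Fin k,
      (∀ j, ∃ δ > 0, ∀ᶠ t in U, δ ≤ cellMass D ν (X t) (g t) (e j)) ∧
      ∀ i ∉ range e, Tendsto (fun t ↦ cellMass D ν (X t) (g t) i) U (𝓝 0) := by
  classical
  set S : Finset (Fin k) :=
    {i | ¬Tendsto (fun t ↦ cellMass D ν (X t) (g t) i) U (𝓝 0)} with hS
  have hSne : S.Nonempty := by
    by_contra hempty
    have hzero (i : Fin k) : Tendsto (fun t ↦ cellMass D ν (X t) (g t) i) U (𝓝 0) :=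
      not_not.1 fun hi ↦ hempty ⟨i, by simpa [hS] using hi⟩
    have hmass : Tendsto (fun t ↦ ∑ i, cellMass D ν (X t) (g t) i) U (𝓝 0) := by
      simpa only [Finset.sum_const_zero] using tendsto_finsetSum Finset.univ fun i _ ↦ hzero i
    have hle : ν.real D ≤ 0 :=
      ge_of_tendsto' hmass fun t ↦ measureReal_le_sum_cellMass hD (X t) (g t)
    exact hle.not_gt (ENNReal.toReal_pos hνD hD.measure_ne_top)
  refine ⟨S.card, hSne.card_pos, (S.orderEmbOfFin rfl).toEmbedding, fun j ↦ ?_, fun i hi ↦ ?_⟩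
  · have hj : ¬Tendsto _ _ _ := (Finset.mem_filter.1 (S.orderEmbOfFin_mem rfl j)).2
    exact (tendsto_zero_or_exists_eventually_le U fun _ ↦ cellMass_nonneg).resolve_left hj
  · simpa [hS] using hi

lemma injective_of_tendsto_site {T : Type*} {𝓕 : Filter T} [𝓕.NeBot] {X : T → Fin k → Euc d}
    {g : T → Fin k → ℝ} {e : Fin n ↪ Fin k} {Y : Fin n → Euc d} {R : ℝ} (hD : IsCompact D)
    (hX : ∀ t, Function.Injective (X t)) (hR : ∀ᶠ t in 𝓕, Rn D ν (X t) (g t) ≤ R)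
    (hmass : ∀ j, ∃ δ > 0, ∀ᶠ t in 𝓕, δ ≤ cellMass D ν (X t) (g t) (e j))
    (hY : ∀ j, Tendsto (fun t ↦ X t (e j)) 𝓕 (𝓝 (Y j))) : Function.Injective Y := by
  intro i j hij
  by_contra hne
  obtain ⟨a, ha, hia⟩ := hmass i
  obtain ⟨b, hb, hjb⟩ := hmass j
  have hdist : Tendsto (fun t ↦ R * ‖X t (e i) - X t (e j)‖ ^ 2) 𝓕 (𝓝 0) := by
    simpa [hij] using (((hY i).sub (hY j)).norm.pow 2).const_mul R
  refine (mul_pos ha hb).not_ge (ge_of_tendsto hdist ?_)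
  filter_upwards [hia, hjb, hR] with t hta htb htR
  calc a * b ≤ cellMass D ν (X t) (g t) (e i) * cellMass D ν (X t) (g t) (e j) :=
        mul_le_mul hta htb hb.le cellMass_nonneg
    _ ≤ Rn D ν (X t) (g t) * ‖X t (e i) - X t (e j)‖ ^ 2 :=
        cellMass_mul_cellMass_le hD ((hX t).ne (e.injective.ne hne))
    _ ≤ R * ‖X t (e i) - X t (e j)‖ ^ 2 := mul_le_mul_of_nonneg_right htR (sq_nonneg _)

lemma exists_isLaguerreLimit [Nonempty (Fin k)] {T : Type*} (U : Ultrafilter T)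
    {X : T → Fin k → Euc d} {g : T → Fin k → ℝ} {R : ℝ} (hD : IsCompact D) (hνD : ν D ≠ 0)
    (hν : ChargesNoHyperplane ν) (hX : ∀ t, Function.Injective (X t))
    (hR : ∀ᶠ t in U, Rn D ν (X t) (g t) ≤ R) :
    ∃ n, 0 < n ∧ ∃ (e : Fin n ↪ Fin k) (Y : Fin n → Euc d) (h : Fin n → ℝ),
      IsLaguerreLimit D ν U X g e Y h ∧ ∀ j, 0 < cellMass D ν Y h j := by
  obtain ⟨n, hn, e, hmass, hlost⟩ := exists_surviving_cells U hD hνD X g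
  obtain ⟨ρ, hρ⟩ := hD.exists_bound_of_continuousOn continuousOn_id
  choose δ hδ hδmass using hmass
  have hsite (j : Fin n) : ∀ᶠ t in U, ‖X t (e j)‖ ≤ ρ + √(R / δ j) := by
    filter_upwards [hδmass j, hR] with t hm ht using norm_site_le hD hρ (hδ j) hm ht
  choose Y hY using fun j ↦ exists_tendsto_of_eventually_norm_le U (hsite j)
  have hweight (i j : Fin n) : ∃ a, Tendsto (fun t ↦ g t (e i) - g t (e j)) U (𝓝 a) := by
    have hpos (j : Fin n) : ∀ᶠ t in U, 0 < cellMass D ν (X t) (g t) (e j) :=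
      (hδmass j).mono fun _ ht ↦ (hδ j).trans_le ht
    exact exists_tendsto_weight_sub U hρ ((hsite i).mono fun _ ht ↦ ht.trans (le_max_left _ _))
      ((hsite j).mono fun _ ht ↦ ht.trans (le_max_right _ _)) (hpos i) (hpos j)
  choose h hh using fun i ↦ hweight i ⟨0, hn⟩
  have hlim : IsLaguerreLimit D ν U X g e Y h :=
    { injective := injective_of_tendsto_site hD hX hR (fun j ↦ ⟨δ j, hδ j, hδmass j⟩) hY
      tendsto_site := hY
      tendsto_weight_sub := fun i j ↦ by simpa using (hh i).sub (hh j)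
      tendsto_cellMass_zero := hlost }
  exact ⟨n, hn, e, Y, h, hlim, fun j ↦
    (hδ j).trans_le (ge_of_tendsto (hlim.tendsto_cellMass hD hν j) (hδmass j))⟩

variable {Φ : Euc d → ℝ} {η : ℝ}

lemma bddAbove_range_Fη (hD : IsCompact D) (hDconv : Convex ℝ D) (hΦ : ContinuousOn Φ D)
    (hη : 0 ≤ η) (k : ℕ) :
    BddAbove (range fun p : (Fin k → Euc d) × (Fin k → ℝ) ↦ Fη D ν Φ η p.1 p.2) := by
  obtain ⟨B, hB⟩ := exists_forall_Fn_le (ν := ν) hD hDconv hΦ k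
  exact ⟨B, forall_mem_range.2 fun p ↦
    (sub_le_self _ (mul_nonneg hη (Rn_nonneg hD))).trans (hB p.1 p.2)⟩

lemma eventually_Rn_le_of_tendsto_Fη (hD : IsCompact D) (hDconv : Convex ℝ D)
    (hΦ : ContinuousOn Φ D) (hη : 0 < η) {T : Type*} {𝓕 : Filter T} {X : T → Fin k → Euc d}
    {g : T → Fin k → ℝ} {v : ℝ} (hv : Tendsto (fun t ↦ Fη D ν Φ η (X t) (g t)) 𝓕 (𝓝 v)) :
    ∃ R, ∀ᶠ t in 𝓕, Rn D ν (X t) (g t) ≤ R := by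
  obtain ⟨B, hB⟩ := exists_forall_Fn_le (ν := ν) hD hDconv hΦ k
  refine ⟨(B - (v - 1)) / η, ?_⟩
  filter_upwards [hv.eventually_const_lt (sub_one_lt v)] with t ht
  rw [Fη] at ht
  rw [le_div_iff₀' hη]
  linarith [hB (X t) (g t)]

lemma exists_single_site (hD : IsCompact D) (hνD : ν D ≠ 0) :
    ∃ (Y : Fin 1 → Euc d) (h : Fin 1 → ℝ), Function.Injective Y ∧ ∀ j, 0 < cellMass D ν Y h j := by
  refine ⟨0, 0, Function.injective_of_subsingleton _, fun j ↦ ?_⟩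
  rw [cellMass, laguerreCell_of_subsingleton]
  exact ENNReal.toReal_pos hνD hD.measure_ne_top

lemma exists_forall_Fη_le (hD : IsCompact D) (hDconv : Convex ℝ D) (hνD : ν D ≠ 0)
    (hν : ChargesNoHyperplane ν) (hΦ : ContinuousOn Φ D) (hη : 0 < η) (hk : 0 < k) :
    ∃ n, 0 < n ∧ n ≤ k ∧ ∃ (Y : Fin n → Euc d) (h : Fin n → ℝ),
      Function.Injective Y ∧ (∀ j, 0 < cellMass D ν Y h j) ∧
      ∀ (X : Fin k → Euc d) (g : Fin k → ℝ), Function.Injective X →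
        Fη D ν Φ η X g ≤ Fη D ν Φ η Y h := by
  have : Nonempty (Fin k) := ⟨⟨0, hk⟩⟩
  let Config := {p : (Fin k → Euc d) × (Fin k → ℝ) // Function.Injective p.1}
  rcases isEmpty_or_nonempty Config with hempty | hnonempty
  -- No `k` distinct sites exist, which happens for `d = 0` and `k ≥ 2`.
  · obtain ⟨Y, h, hY, hm⟩ := exists_single_site hD hνD
    exact ⟨1, one_pos, hk, Y, h, hY, hm, fun X g hX ↦ hempty.elim ⟨(X, g), hX⟩⟩
  have hbdd : BddAbove (range fun p : Config ↦ Fη D ν Φ η p.1.1 p.1.2) :=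
    (bddAbove_range_Fη hD hDconv hΦ hη.le k).mono <|
      range_comp_subset_range Subtype.val fun p : (Fin k → Euc d) × (Fin k → ℝ) ↦
        Fη D ν Φ η p.1 p.2
  obtain ⟨U, hU⟩ := exists_ultrafilter_tendsto_ciSup hbdd
  obtain ⟨R, hR⟩ := eventually_Rn_le_of_tendsto_Fη hD hDconv hΦ hη hU
  obtain ⟨n, hn, e, Y, h, hlim, hm⟩ :=
    exists_isLaguerreLimit U hD hνD hν (fun p : Config ↦ p.2) hR
  have hnk : n ≤ k := by simpa using Fintype.card_le_of_embedding e
  exact ⟨n, hn, hnk, Y, h, hlim.injective, hm, fun X g hX ↦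
    (le_ciSup hbdd ⟨(X, g), hX⟩).trans (hlim.le_Fη_of_tendsto hD hDconv hν hΦ hη hU)⟩

end Existence

theorem penalized_functional_attains_max_general {d : ℕ} {D : Set (Euc d)} (hD : IsCompact D)
    (hDconv : Convex ℝ D) {ν : Measure (Euc d)} [IsFiniteMeasureOnCompacts ν] (hνD : ν D ≠ 0)
    (hν : ChargesNoHyperplane ν) {Φ : Euc d → ℝ} (hΦ : ContinuousOn Φ D) {η : ℝ} (hη : 0 < η)
    {l : ℕ} (hl : 0 < l) :
    ∃ n, 0 < n ∧ n ≤ l ∧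
      ∃ (Xs : Fin n → Euc d) (gs : Fin n → ℝ), Function.Injective Xs ∧
        (∀ i, 0 < cellMass D ν Xs gs i) ∧
        (∀ (X : Fin n → Euc d) (g : Fin n → ℝ), Function.Injective X →
          Fη D ν Φ η X g ≤ Fη D ν Φ η Xs gs) ∧
        (∀ (X : Fin l → Euc d) (g : Fin l → ℝ), Function.Injective X →
          Fη D ν Φ η X g ≤ Fη D ν Φ η Xs gs) := by
  induction l using Nat.strong_induction_on with
  | _ l ih =>
    obtain ⟨n, hn, hnl, Y, h, hY, hm, hmax⟩ := exists_forall_Fη_le hD hDconv hνD hν hΦ hη hl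
    rcases hnl.eq_or_lt with rfl | hlt
    · exact ⟨n, hn, le_rfl, Y, h, hY, hm, hmax, hmax⟩
    · obtain ⟨n', hn', hnn', Xs, gs, hXs, hms, hself, hdom⟩ := ih n hlt hn
      exact ⟨n', hn', hnn'.trans hnl, Xs, gs, hXs, hms, hself, fun X g hX ↦
        (hmax X g hX).trans (hdom Y h hY)⟩

/-- Theorem on existence of maximizers of `F_n^η`: for every number of sites
`l` there is `n ≤ l` such that the penalized functional `F_n^η` admits a maximizer `(X*, g*)`
over `n`-tuples of pairwise distinct sites and weights, with all cell masses positive, whose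
value dominates the supremum of `F_l^η`. -/
theorem penalized_functional_attains_max
    {d : ℕ} (D : Set (Euc d)) (hD : IsCompact D) (hDconv : Convex ℝ D)
    (ν : Measure (Euc d)) [IsProbabilityMeasure ν] (hνD : ν Dᶜ = 0)
    (hac : ν ≪ (volume : Measure (Euc d)))
    (C : ℝ) (hC : ∀ᵐ x ∂(volume : Measure (Euc d)), (ν.rnDeriv volume x).toReal ≤ C)
    (Φ : Euc d → ℝ) (hΦ : ContinuousOn Φ D)
    (η : ℝ) (hη : 0 < η) (l : ℕ) (hl : 0 < l) :
    ∃ n, 0 < n ∧ n ≤ l ∧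
      ∃ (Xs : Fin n → Euc d) (gs : Fin n → ℝ), Function.Injective Xs ∧
        (∀ i, 0 < cellMass D ν Xs gs i) ∧
        (∀ (X : Fin n → Euc d) (g : Fin n → ℝ), Function.Injective X →
          Fη D ν Φ η X g ≤ Fη D ν Φ η Xs gs) ∧
        (∀ (X : Fin l → Euc d) (g : Fin l → ℝ), Function.Injective X →
          Fη D ν Φ η X g ≤ Fη D ν Φ η Xs gs) :=
  penalized_functional_attains_max_general hD hDconv
    (by simp [(prob_compl_eq_zero_iff hD.measurableSet).1 hνD])
    ((ChargesNoHyperplane.of_isAddHaarMeasure volume).mono_ac hac) hΦ hη hl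
end
end

section
/- Let D ⊂ ℝ^d be compact and convex, ν a probability measure on D absolutely continuous with respect to Lebesgue measure, ε > 0, η > 0, and Φ ∈ C(D). Then for every given number of sites l ∈ ℕ there exists n ≤ l such that the entropy-regularized penalized functional F_n^{η,ε}(X,g) = Σ_i m_i^ε[X,g] Φ(b_i^ε[X,g]) − η R_n^ε(X,g) admits a maximizer (X*,g*) over n-tuples of pairwise distinct sites and weight vectors, with m_i^ε[X*,g*] > 0 for all i = 1,…,n, and F_n^{η,ε}(X*,g*) ≥ sup_{(X,g)} F_l^{η,ε}(X,g). -/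
open MeasureTheory Set Filter Topology
open scoped ENNReal NNReal

noncomputable section

/-- Entropy-regularized cell function
`χ_i^ε[X,g](y) = exp((g_i − |y−x_i|²)/ε) / Σ_j exp((g_j − |y−x_j|²)/ε)`. -/
def chiEps {d n : ℕ} (X : Fin n → Euc d) (g : Fin n → ℝ) (ε : ℝ) (i : Fin n)
    (y : Euc d) : ℝ :=
  Real.exp ((g i - ‖y - X i‖ ^ 2) / ε) / ∑ j, Real.exp ((g j - ‖y - X j‖ ^ 2) / ε)

/-- Regularized mass `m_i^ε[X,g] = ∫ χ_i^ε[X,g] dν`. -/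
def mEps {d n : ℕ} (ν : Measure (Euc d)) (X : Fin n → Euc d) (g : Fin n → ℝ) (ε : ℝ)
    (i : Fin n) : ℝ :=
  ∫ y, chiEps X g ε i y ∂ν

/-- Regularized barycenter `b_i^ε[X,g] = (m_i^ε)⁻¹ ∫ y χ_i^ε[X,g](y) dν(y)`. -/
def bEps {d n : ℕ} (ν : Measure (Euc d)) (X : Fin n → Euc d) (g : Fin n → ℝ) (ε : ℝ)
    (i : Fin n) : Euc d :=
  (mEps ν X g ε i)⁻¹ • ∫ y, chiEps X g ε i y • y ∂ν

/-- Entropy-regularized objective `F_n^ε[X,g] = Σ_i m_i^ε[X,g] Φ(b_i^ε[X,g])`. -/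
def FnEps {d n : ℕ} (ν : Measure (Euc d)) (Φ : Euc d → ℝ) (X : Fin n → Euc d)
    (g : Fin n → ℝ) (ε : ℝ) : ℝ :=
  ∑ i, mEps ν X g ε i * Φ (bEps ν X g ε i)

/-- Entropy-regularized penalty `R_n^ε[X,g]`. -/
def RnEps {d n : ℕ} (ν : Measure (Euc d)) (X : Fin n → Euc d) (g : Fin n → ℝ) (ε : ℝ) : ℝ :=
  (∑ i, ∫ y, ‖y - X i‖ ^ 2 * chiEps X g ε i y ∂ν)
  + ∑ i, ∑ j, if i ≠ j then mEps ν X g ε i * mEps ν X g ε j / ‖X i - X j‖ ^ 2 else 0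

/-- Entropy-regularized penalized objective `F_n^{η,ε} = F_n^ε − η R_n^ε`. -/
def FηEps {d n : ℕ} (ν : Measure (Euc d)) (Φ : Euc d → ℝ) (η : ℝ) (X : Fin n → Euc d)
    (g : Fin n → ℝ) (ε : ℝ) : ℝ :=
  FnEps ν Φ X g ε - η * RnEps ν X g ε

/-!
Every `χ_i^ε` is positive, so only the attainment of the supremum needs an argument. Along a
maximizing sequence the penalty stays bounded, and each site whose mass does not vanish in the limit
is kept in a bounded region by the quadratic part of the penalty and away from the other such sites
by the repulsive part. The weights of these sites stay within bounded distance of each other, since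
otherwise one of them would lose all its mass. As `χ^ε` is unchanged when a constant is added to all
weights, the surviving sites and weights converge along an ultrafilter. Removing the sites of
vanishing mass changes every surviving term by at most the removed mass, so the limit configuration
has at least the supremal value, with possibly fewer sites. The best of the configurations obtained
in this way for each number of sites `k ≤ l` dominates all of them, in particular those with its own
number of sites.
-/

section General

lemma sum_comp_embedding_le {ι κ M : Type*} [Fintype ι] [Fintype κ] [AddCommMonoid M]
    [Preorder M] [AddLeftMono M] (e : ι ↪ κ) {f : κ → M} (hf : ∀ i, 0 ≤ f i) :
    ∑ a, f (e a) ≤ ∑ i, f i := by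
  rw [← Finset.sum_map Finset.univ e f]
  exact Finset.sum_le_univ_sum_of_nonneg hf

lemma exists_embedding_pos_sum_eq {ι M : Type*} [Fintype ι] [AddCommMonoid M] [PartialOrder M]
    {f : ι → M} (hf : ∀ i, 0 ≤ f i) :
    ∃ (N : ℕ) (e : Fin N ↪ ι), (∀ a, 0 < f (e a)) ∧ ∑ a, f (e a) = ∑ i, f i := by
  classical
  let E := (Fintype.equivFin {i // 0 < f i}).symm
  refine ⟨_, E.toEmbedding.trans (Function.Embedding.subtype _), fun a => (E a).2, ?_⟩
  calc ∑ a, f (E a) = ∑ i : {i // 0 < f i}, f i := E.sum_comp fun i => f i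
    _ = ∑ i with 0 < f i, f i := Finset.sum_subtype _ (by simp) f |>.symm
    _ = ∑ i, f i := Finset.sum_filter_of_ne fun i _ hi => (hf i).lt_of_ne' hi

lemma exists_tendsto_of_isBoundedUnder_norm {ι E : Type*} [SeminormedAddCommGroup E]
    [ProperSpace E] {U : Ultrafilter ι} {f : ι → E}
    (hf : IsBoundedUnder (· ≤ ·) (U : Filter ι) fun k => ‖f k‖) : ∃ x, Tendsto f U (𝓝 x) := by
  obtain ⟨r, hr⟩ := hf
  obtain ⟨x, -, hx⟩ := (isCompact_closedBall (0 : E) r).ultrafilter_le_nhds' (U.map f)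
    ((eventually_map.1 hr).mono fun k hk => mem_closedBall_zero_iff.2 hk)
  exact ⟨x, hx⟩

section Integral

variable {α E : Type*} [MeasurableSpace α] [NormedAddCommGroup E] {μ : Measure α}

lemma integrable_of_continuous_of_ae_mem_compact [TopologicalSpace α] [OpensMeasurableSpace α]
    [T2Space α] [IsFiniteMeasureOnCompacts μ] {s : Set α} (hs : IsCompact s)
    (hμs : ∀ᵐ x ∂μ, x ∈ s) {f : α → E} (hf : Continuous f) : Integrable f μ := by
  rw [← Measure.restrict_eq_self_of_ae_mem hμs]
  exact hf.continuousOn.integrableOn_compact hs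

lemma continuous_integral_of_ae_mem_compact [NormedSpace ℝ E] [TopologicalSpace α]
    [OpensMeasurableSpace α] [SecondCountableTopologyEither α E] [IsLocallyFiniteMeasure μ]
    {β : Type*} [TopologicalSpace β] [FirstCountableTopology β] [LocallyCompactSpace β]
    {s : Set α} (hs : IsCompact s) (hμs : ∀ᵐ x ∂μ, x ∈ s) {f : β → α → E}
    (hf : Continuous (Function.uncurry f)) : Continuous fun t => ∫ x, f t x ∂μ := by
  rw [← Measure.restrict_eq_self_of_ae_mem hμs]
  exact continuous_parametric_integral_of_continuous hf hs

lemma weighted_average_mem [NormedSpace ℝ E] [CompleteSpace E] [NeZero μ] {s : Set E}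
    (hs : Convex ℝ s) (hsc : IsClosed s) {w : α → ℝ} {f : α → E} (hw : ∀ x, 0 < w x)
    (hwi : Integrable w μ) (hfs : ∀ᵐ x ∂μ, f x ∈ s) (hwf : Integrable (fun x => w x • f x) μ) :
    (∫ x, w x ∂μ)⁻¹ • ∫ x, w x • f x ∂μ ∈ s := by
  -- `μ.tilted (log ∘ w)` is the probability measure with density proportional to `w`.
  have hexp : ∀ x, Real.exp (Real.log (w x)) = w x := fun x => Real.exp_log (hw x)
  have hwi' : Integrable (fun x => Real.exp (Real.log (w x))) μ := by simpa only [hexp] using hwi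
  have := isProbabilityMeasure_tilted hwi'
  have hmem := hs.integral_mem hsc ((tilted_absolutelyContinuous μ _).ae_le hfs)
    ((integrable_tilted_iff hwi' f).2 (by simpa only [hexp] using hwf))
  simpa only [integral_tilted, hexp, div_eq_inv_mul, mul_smul, integral_smul] using hmem

end Integral

end General

section Definitions

variable {d n : ℕ} (ν : Measure (Euc d)) (X : Fin n → Euc d) (g : Fin n → ℝ) (ε : ℝ)

/-- The contribution `∫ |y − x_i|² χ_i^ε dν` of the `i`-th cell to the quadratic part of
`R_n^ε`. -/
def cellEnergyEps (i : Fin n) : ℝ :=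
  ∫ y, ‖y - X i‖ ^ 2 * chiEps X g ε i y ∂ν

/-- The contribution `m_i^ε m_j^ε / |x_i − x_j|²` of the pair `(i, j)` to the repulsive part of
`R_n^ε`, set to zero on the diagonal. -/
def repulsionEps (i j : Fin n) : ℝ :=
  if i ≠ j then mEps ν X g ε i * mEps ν X g ε j / ‖X i - X j‖ ^ 2 else 0

/-- The part of `F_n^{η,ε}[X,g]` in which only sites in the range of `e` occur. The masses and
barycenters are still those of the full configuration `(X, g)`, which distinguishes it from the
functional of the subconfiguration `(X ∘ e, g ∘ e)`. -/
def partialFηEps {N : ℕ} (Φ : Euc d → ℝ) (η : ℝ) (e : Fin N ↪ Fin n) : ℝ :=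
  ∑ a, mEps ν X g ε (e a) * Φ (bEps ν X g ε (e a))
    - η * (∑ a, cellEnergyEps ν X g ε (e a) + ∑ a, ∑ b, repulsionEps ν X g ε (e a) (e b))

/-- The sites and weights of `(X k, g k)` selected by `e` converge to `(Y, h)`, and the mass of all
other sites vanishes in the limit, i.e. the selected masses sum up to the total mass of `ν`. -/
structure SubconfigTendsto {ι : Type*} {N : ℕ} (U : Filter ι) (X : ι → Fin n → Euc d)
    (g : ι → Fin n → ℝ) (e : Fin N ↪ Fin n) (Y : Fin N → Euc d) (h : Fin N → ℝ) : Prop where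
  sites : Tendsto (fun k => X k ∘ e) U (𝓝 Y)
  weights : Tendsto (fun k => g k ∘ e) U (𝓝 h)
  mass : Tendsto (fun k => ∑ b, mEps ν (X k) (g k) ε (e b)) U (𝓝 (ν.real univ))

end Definitions

section CellFunctions

variable {d n N : ℕ} (X : Fin n → Euc d) (g : Fin n → ℝ) (ε : ℝ)

lemma sum_exp_weight_pos [NeZero n] (y : Euc d) :
    0 < ∑ j, Real.exp ((g j - ‖y - X j‖ ^ 2) / ε) :=
  Finset.sum_pos (fun _ _ => Real.exp_pos _) Finset.univ_nonempty

lemma chiEps_pos (i : Fin n) (y : Euc d) : 0 < chiEps X g ε i y :=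
  have := NeZero.of_pos i.pos
  div_pos (Real.exp_pos _) (sum_exp_weight_pos X g ε y)

lemma sum_chiEps [NeZero n] (y : Euc d) : ∑ i, chiEps X g ε i y = 1 := by
  simp only [chiEps, ← Finset.sum_div]
  exact div_self (sum_exp_weight_pos X g ε y).ne'

lemma chiEps_le_one (i : Fin n) (y : Euc d) : chiEps X g ε i y ≤ 1 := by
  have := NeZero.of_pos i.pos
  rw [← sum_chiEps X g ε y]
  exact Finset.single_le_sum (f := fun j => chiEps X g ε j y)
    (fun j _ => (chiEps_pos X g ε j y).le) (Finset.mem_univ i)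

@[fun_prop]
lemma continuous_chiEps {T : Type*} [TopologicalSpace T] {X : T → Fin n → Euc d}
    {g : T → Fin n → ℝ} {y : T → Euc d} {ε : ℝ} {i : Fin n} (hX : Continuous X)
    (hg : Continuous g) (hy : Continuous y) : Continuous fun t => chiEps (X t) (g t) ε i (y t) := by
  have := NeZero.of_pos i.pos
  refine Continuous.div (by fun_prop) (by fun_prop) fun t => ?_
  exact (sum_exp_weight_pos (X t) (g t) ε (y t)).ne'

lemma chiEps_sub_const (c : ℝ) : chiEps X (fun j => g j - c) ε = chiEps X g ε := by
  funext i y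
  have hexp : ∀ j, Real.exp ((g j - c - ‖y - X j‖ ^ 2) / ε)
      = Real.exp ((g j - ‖y - X j‖ ^ 2) / ε) * Real.exp (-c / ε) := fun j => by
    rw [← Real.exp_add]; ring_nf
  simp only [chiEps, hexp, ← Finset.sum_mul]
  exact mul_div_mul_right _ _ (Real.exp_pos _).ne'

lemma chiEps_le_exp_weight_sub (i j : Fin n) (y : Euc d) :
    chiEps X g ε i y
      ≤ Real.exp ((g i - ‖y - X i‖ ^ 2) / ε - (g j - ‖y - X j‖ ^ 2) / ε) := by
  rw [Real.exp_sub]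
  exact div_le_div_of_nonneg_left (Real.exp_pos _).le (Real.exp_pos _)
    (Finset.single_le_sum (f := fun j => Real.exp ((g j - ‖y - X j‖ ^ 2) / ε))
      (fun _ _ => (Real.exp_pos _).le) (Finset.mem_univ j))

lemma chiEps_le_chiEps_comp (e : Fin N ↪ Fin n) (a : Fin N) (y : Euc d) :
    chiEps X g ε (e a) y ≤ chiEps (X ∘ e) (g ∘ e) ε a y :=
  have := NeZero.of_pos a.pos
  div_le_div_of_nonneg_left (Real.exp_pos _).le (sum_exp_weight_pos (X ∘ e) (g ∘ e) ε y)
    (sum_comp_embedding_le e (f := fun j => Real.exp ((g j - ‖y - X j‖ ^ 2) / ε))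
      fun _ => (Real.exp_pos _).le)

-- All cell functions grow when sites are removed, and the total growth is the removed mass.
lemma chiEps_comp_sub_chiEps_le (e : Fin N ↪ Fin n) (a : Fin N) (y : Euc d) :
    chiEps (X ∘ e) (g ∘ e) ε a y - chiEps X g ε (e a) y ≤ 1 - ∑ b, chiEps X g ε (e b) y := by
  have := NeZero.of_pos a.pos
  rw [← sum_chiEps (X ∘ e) (g ∘ e) ε y, ← Finset.sum_sub_distrib]
  exact Finset.single_le_sum
    (f := fun b => chiEps (X ∘ e) (g ∘ e) ε b y - chiEps X g ε (e b) y)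
    (fun b _ => sub_nonneg.2 (chiEps_le_chiEps_comp X g ε e b y)) (Finset.mem_univ a)

end CellFunctions

section Masses

variable {d n : ℕ} {ν : Measure (Euc d)} (X : Fin n → Euc d) (g : Fin n → ℝ) (ε : ℝ)

lemma integrable_chiEps [IsFiniteMeasure ν] (i : Fin n) : Integrable (chiEps X g ε i) ν := by
  refine Integrable.of_bound (by fun_prop : Continuous (chiEps X g ε i)).aestronglyMeasurable 1 ?_
  refine .of_forall fun y => ?_
  rw [Real.norm_of_nonneg (chiEps_pos X g ε i y).le]
  exact chiEps_le_one X g ε i y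

lemma mEps_nonneg (i : Fin n) : 0 ≤ mEps ν X g ε i :=
  integral_nonneg fun y => (chiEps_pos X g ε i y).le

lemma mEps_pos [IsFiniteMeasure ν] [NeZero ν] (i : Fin n) : 0 < mEps ν X g ε i := by
  refine (integral_pos_iff_support_of_nonneg (fun y => (chiEps_pos X g ε i y).le)
    (integrable_chiEps X g ε i)).2 ?_
  have hsupport : Function.support (chiEps X g ε i) = univ :=
    eq_univ_of_forall fun y => (chiEps_pos X g ε i y).ne'
  rw [hsupport]
  exact NeZero.pos _

lemma sum_mEps [IsFiniteMeasure ν] [NeZero n] : ∑ i, mEps ν X g ε i = ν.real univ := by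
  simp only [mEps, ← integral_finsetSum _ fun i _ => integrable_chiEps X g ε i, sum_chiEps,
    integral_const, smul_eq_mul, mul_one]

lemma mEps_le [IsFiniteMeasure ν] (i : Fin n) : mEps ν X g ε i ≤ ν.real univ := by
  have := NeZero.of_pos i.pos
  rw [← sum_mEps X g ε]
  exact Finset.single_le_sum (fun j _ => mEps_nonneg X g ε j) (Finset.mem_univ i)

lemma mEps_sub_const (c : ℝ) : mEps ν X (fun j => g j - c) ε = mEps ν X g ε := by
  funext i
  simp only [mEps, chiEps_sub_const]

lemma FηEps_sub_const (Φ : Euc d → ℝ) (η c : ℝ) :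
    FηEps ν Φ η X (fun j => g j - c) ε = FηEps ν Φ η X g ε := by
  simp only [FηEps, FnEps, RnEps, bEps, mEps_sub_const, chiEps_sub_const]

lemma bEps_mem {D : Set (Euc d)} (hD : IsCompact D) (hDconv : Convex ℝ D) [IsFiniteMeasure ν]
    [NeZero ν] (hνD : ∀ᵐ y ∂ν, y ∈ D) (i : Fin n) : bEps ν X g ε i ∈ D :=
  weighted_average_mem hDconv hD.isClosed (chiEps_pos X g ε i) (integrable_chiEps X g ε i) hνD
    (integrable_of_continuous_of_ae_mem_compact hD hνD (by fun_prop))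

end Masses

section Penalty

variable {d n : ℕ} {ν : Measure (Euc d)} (X : Fin n → Euc d) (g : Fin n → ℝ) (ε : ℝ)

lemma RnEps_eq : RnEps ν X g ε
    = ∑ i, cellEnergyEps ν X g ε i + ∑ i, ∑ j, repulsionEps ν X g ε i j :=
  rfl

lemma cellEnergyEps_nonneg (i : Fin n) : 0 ≤ cellEnergyEps ν X g ε i :=
  integral_nonneg fun y => mul_nonneg (sq_nonneg _) (chiEps_pos X g ε i y).le

lemma repulsionEps_nonneg (i j : Fin n) : 0 ≤ repulsionEps ν X g ε i j := by
  have hi := mEps_nonneg (ν := ν) X g ε i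
  have hj := mEps_nonneg (ν := ν) X g ε j
  unfold repulsionEps
  split_ifs <;> positivity

lemma sum_repulsionEps_nonneg (i : Fin n) : 0 ≤ ∑ j, repulsionEps ν X g ε i j :=
  Finset.sum_nonneg fun j _ => repulsionEps_nonneg X g ε i j

lemma RnEps_nonneg : 0 ≤ RnEps ν X g ε :=
  add_nonneg (Finset.sum_nonneg fun i _ => cellEnergyEps_nonneg X g ε i)
    (Finset.sum_nonneg fun i _ => sum_repulsionEps_nonneg X g ε i)

lemma cellEnergyEps_le_RnEps (i : Fin n) : cellEnergyEps ν X g ε i ≤ RnEps ν X g ε :=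
  (Finset.single_le_sum (fun i _ => cellEnergyEps_nonneg X g ε i) (Finset.mem_univ i)).trans
    (le_add_of_nonneg_right (Finset.sum_nonneg fun i _ => sum_repulsionEps_nonneg X g ε i))

lemma repulsionEps_le_RnEps (i j : Fin n) : repulsionEps ν X g ε i j ≤ RnEps ν X g ε :=
  calc repulsionEps ν X g ε i j ≤ ∑ j, repulsionEps ν X g ε i j :=
        Finset.single_le_sum (fun j _ => repulsionEps_nonneg X g ε i j) (Finset.mem_univ j)
    _ ≤ ∑ i, ∑ j, repulsionEps ν X g ε i j :=
        Finset.single_le_sum (fun i _ => sum_repulsionEps_nonneg X g ε i) (Finset.mem_univ i)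
    _ ≤ RnEps ν X g ε :=
        le_add_of_nonneg_left (Finset.sum_nonneg fun i _ => cellEnergyEps_nonneg X g ε i)

lemma mEps_mul_mEps_le {X : Fin n → Euc d} {i j : Fin n} (hij : X i ≠ X j) :
    mEps ν X g ε i * mEps ν X g ε j ≤ RnEps ν X g ε * ‖X i - X j‖ ^ 2 := by
  have hpos : 0 < ‖X i - X j‖ := norm_pos_iff.2 (sub_ne_zero.2 hij)
  have h := repulsionEps_le_RnEps (ν := ν) X g ε i j
  rwa [repulsionEps, if_pos (ne_of_apply_ne X hij), div_le_iff₀ (by positivity)] at h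

lemma sq_norm_site_mul_mEps_le [IsFiniteMeasure ν] {R : ℝ} (hR : ∀ᵐ y ∂ν, ‖y‖ ≤ R) (i : Fin n) :
    ‖X i‖ ^ 2 * mEps ν X g ε i ≤ 2 * cellEnergyEps ν X g ε i + 2 * R ^ 2 * mEps ν X g ε i := by
  have hint : Integrable (fun y => ‖y - X i‖ ^ 2 * chiEps X g ε i y) ν :=
    integrable_of_continuous_of_ae_mem_compact (isCompact_closedBall 0 R)
      (hR.mono fun y hy => mem_closedBall_zero_iff.2 hy) (by fun_prop)
  have hχ := integrable_chiEps (ν := ν) X g ε i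
  simp only [mEps, cellEnergyEps, ← integral_const_mul]
  rw [← integral_add (hint.const_mul 2) (hχ.const_mul _)]
  refine integral_mono_ae (hχ.const_mul _) ((hint.const_mul 2).add (hχ.const_mul _)) ?_
  filter_upwards [hR] with y hy
  have hXi : ‖X i‖ ^ 2 ≤ 2 * ‖y - X i‖ ^ 2 + 2 * R ^ 2 :=
    calc ‖X i‖ ^ 2 ≤ (‖y - X i‖ + ‖y‖) ^ 2 := by
          gcongr
          simpa only [norm_sub_rev, add_comm] using norm_le_norm_add_norm_sub' (X i) y
      _ ≤ 2 * (‖y - X i‖ ^ 2 + ‖y‖ ^ 2) := add_sq_le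
      _ ≤ 2 * ‖y - X i‖ ^ 2 + 2 * R ^ 2 := by rw [mul_add]; gcongr
  calc ‖X i‖ ^ 2 * chiEps X g ε i y
      ≤ (2 * ‖y - X i‖ ^ 2 + 2 * R ^ 2) * chiEps X g ε i y :=
        mul_le_mul_of_nonneg_right hXi (chiEps_pos X g ε i y).le
    _ = _ := by ring

lemma mul_log_mEps_div_le_weight_sub [IsFiniteMeasure ν] [NeZero ν] {ε : ℝ} (hε : 0 < ε) {R : ℝ}
    (hR : ∀ᵐ y ∂ν, ‖y‖ ≤ R) (i j : Fin n) :
    ε * Real.log (mEps ν X g ε i / ν.real univ) - (R + ‖X j‖) ^ 2 ≤ g i - g j := by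
  have hν : 0 < ν.real univ := measureReal_univ_pos
  have hm : mEps ν X g ε i
      ≤ ∫ _, Real.exp ((g i - g j + (R + ‖X j‖) ^ 2) / ε) ∂ν := by
    refine integral_mono_ae (integrable_chiEps X g ε i) (integrable_const _) ?_
    filter_upwards [hR] with y hy
    refine (chiEps_le_exp_weight_sub X g ε i j y).trans (Real.exp_le_exp.2 ?_)
    rw [← sub_div]
    have hyj : ‖y - X j‖ ^ 2 ≤ (R + ‖X j‖) ^ 2 := by
      gcongr
      exact (norm_sub_le _ _).trans (by gcongr)
    gcongr
    linarith [sq_nonneg ‖y - X i‖]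
  rw [integral_const, smul_eq_mul, ← div_le_iff₀' hν,
    ← Real.log_le_iff_le_exp (div_pos (mEps_pos X g ε i) hν), le_div_iff₀' hε] at hm
  linarith

end Penalty

section UpperBounds

variable {d n N : ℕ} {D : Set (Euc d)} (hD : IsCompact D) (hDconv : Convex ℝ D)
  {ν : Measure (Euc d)} [IsFiniteMeasure ν] [NeZero ν] (hνD : ∀ᵐ y ∂ν, y ∈ D)
  {Φ : Euc d → ℝ} {C η : ℝ} (hC : ∀ x ∈ D, Φ x ≤ C)
  (X : Fin n → Euc d) (g : Fin n → ℝ) (ε : ℝ)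

include hD hDconv hνD hC

lemma mEps_mul_le (i : Fin n) : mEps ν X g ε i * Φ (bEps ν X g ε i) ≤ C * mEps ν X g ε i := by
  rw [mul_comm]
  exact mul_le_mul_of_nonneg_right (hC _ (bEps_mem X g ε hD hDconv hνD i)) (mEps_nonneg X g ε i)

lemma FηEps_le [NeZero n] : FηEps ν Φ η X g ε ≤ C * ν.real univ - η * RnEps ν X g ε := by
  refine sub_le_sub_right ?_ _
  rw [← sum_mEps X g ε, Finset.mul_sum]
  exact Finset.sum_le_sum fun i _ => mEps_mul_le hD hDconv hνD hC X g ε i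

lemma FηEps_le_partialFηEps [NeZero n] (hη : 0 ≤ η) (e : Fin N ↪ Fin n) :
    FηEps ν Φ η X g ε
      ≤ partialFηEps ν X g ε Φ η e + C * (ν.real univ - ∑ a, mEps ν X g ε (e a)) := by
  have hobj := sum_comp_embedding_le e
    fun i => sub_nonneg.2 (mEps_mul_le hD hDconv hνD hC X g ε i)
  simp only [Finset.sum_sub_distrib, ← Finset.mul_sum, sum_mEps] at hobj
  have henergy := sum_comp_embedding_le e (cellEnergyEps_nonneg (ν := ν) X g ε)
  have hrepulsion : ∑ a, ∑ b, repulsionEps ν X g ε (e a) (e b)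
      ≤ ∑ i, ∑ j, repulsionEps ν X g ε i j :=
    (Finset.sum_le_sum fun a _ => sum_comp_embedding_le e (repulsionEps_nonneg X g ε (e a))).trans
      (sum_comp_embedding_le e (sum_repulsionEps_nonneg X g ε))
  have hpenalty := mul_le_mul_of_nonneg_left (add_le_add henergy hrepulsion) hη
  rw [FηEps, FnEps, RnEps_eq, partialFηEps]
  linarith

end UpperBounds

section Limits

variable {d n N : ℕ} {D : Set (Euc d)} {ν : Measure (Euc d)} {ε : ℝ}

lemma norm_integral_chiEps_comp_sub_le [IsFiniteMeasure ν] (hD : IsCompact D) (hνD : ∀ᵐ y ∂ν, y ∈ D)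
    (X : Fin n → Euc d) (g : Fin n → ℝ) (e : Fin N ↪ Fin n) (a : Fin N) {E : Type*}
    [NormedAddCommGroup E] [NormedSpace ℝ E] {w : Euc d → E} (hw : Continuous w) {B : ℝ}
    (hB : ∀ y ∈ D, ‖w y‖ ≤ B) :
    ‖∫ y, chiEps (X ∘ e) (g ∘ e) ε a y • w y ∂ν - ∫ y, chiEps X g ε (e a) y • w y ∂ν‖
      ≤ B * (ν.real univ - ∑ b, mEps ν X g ε (e b)) := by
  have hint {E : Type _} [NormedAddCommGroup E] {f : Euc d → E} (hf : Continuous f) :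
      Integrable f ν := integrable_of_continuous_of_ae_mem_compact hD hνD hf
  have hsum : Integrable (fun y => ∑ b, chiEps X g ε (e b) y) ν :=
    integrable_finsetSum _ fun b _ => integrable_chiEps X g ε (e b)
  have hmass : ν.real univ - ∑ b, mEps ν X g ε (e b)
      = ∫ y, (1 - ∑ b, chiEps X g ε (e b) y) ∂ν := by
    rw [integral_sub (integrable_const _) hsum,
      integral_finsetSum _ fun b _ => integrable_chiEps X g ε (e b)]
    simp [mEps]
  rw [← integral_sub (hint (by fun_prop)) (hint (by fun_prop)), hmass, ← integral_const_mul]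
  refine norm_integral_le_of_norm_le (((integrable_const _).sub hsum).const_mul B) ?_
  filter_upwards [hνD] with y hy
  have hnonneg := sub_nonneg.2 (chiEps_le_chiEps_comp X g ε e a y)
  rw [← sub_smul, norm_smul, mul_comm, Real.norm_of_nonneg hnonneg]
  exact mul_le_mul (hB y hy) (chiEps_comp_sub_chiEps_le X g ε e a y) hnonneg
    ((norm_nonneg _).trans (hB y hy))

namespace SubconfigTendsto

variable {ι : Type*} {U : Filter ι} {X : ι → Fin n → Euc d} {g : ι → Fin n → ℝ}
  {e : Fin N ↪ Fin n} {Y : Fin N → Euc d} {h : Fin N → ℝ}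

lemma tendsto_site (H : SubconfigTendsto ν ε U X g e Y h) (a : Fin N) :
    Tendsto (fun k => X k (e a)) U (𝓝 (Y a)) :=
  tendsto_pi_nhds.1 H.sites a

variable [IsFiniteMeasure ν]

lemma tendsto_integral_chiEps_smul (H : SubconfigTendsto ν ε U X g e Y h) (hD : IsCompact D)
    (hνD : ∀ᵐ y ∂ν, y ∈ D) (a : Fin N) {E : Type*} [NormedAddCommGroup E] [NormedSpace ℝ E]
    {w : Euc d → Euc d → E} (hw : Continuous (Function.uncurry w)) :
    Tendsto (fun k => ∫ y, chiEps (X k) (g k) ε (e a) y • w (X k (e a)) y ∂ν) U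
      (𝓝 (∫ y, chiEps Y h ε a y • w (Y a) y ∂ν)) := by
  have hcont : Continuous fun p : (Fin N → Euc d) × (Fin N → ℝ) =>
      ∫ y, chiEps p.1 p.2 ε a y • w (p.1 a) y ∂ν := by
    refine continuous_integral_of_ae_mem_compact hD hνD (Continuous.smul (by fun_prop) ?_)
    exact hw.comp (by fun_prop :
      Continuous fun q : ((Fin N → Euc d) × (Fin N → ℝ)) × Euc d => (q.1.1 a, q.2))
  have hsub : Tendsto (fun k => ∫ y, chiEps (X k ∘ e) (g k ∘ e) ε a y • w (X k (e a)) y ∂ν) U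
      (𝓝 (∫ y, chiEps Y h ε a y • w (Y a) y ∂ν)) := by
    have hpair : Tendsto (fun k => (X k ∘ e, g k ∘ e)) U (𝓝 (Y, h)) :=
      H.sites.prodMk_nhds H.weights
    simpa only [Function.comp_def] using (hcont.tendsto (Y, h)).comp hpair
  obtain ⟨B, hB⟩ := ((isCompact_closedBall (Y a) 1).prod hD).exists_bound_of_continuousOn
    hw.continuousOn
  have hnear : ∀ᶠ k in U, X k (e a) ∈ Metric.closedBall (Y a) 1 :=
    (H.tendsto_site a).eventually (Metric.closedBall_mem_nhds _ one_pos)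
  have hdiff : Tendsto (fun k => ∫ y, chiEps (X k ∘ e) (g k ∘ e) ε a y • w (X k (e a)) y ∂ν
      - ∫ y, chiEps (X k) (g k) ε (e a) y • w (X k (e a)) y ∂ν) U (𝓝 0) := by
    refine squeeze_zero_norm' (hnear.mono fun k hk => norm_integral_chiEps_comp_sub_le hD hνD
      (X k) (g k) e a (hw.uncurry_left _) fun y hy => hB (X k (e a), y) ⟨hk, hy⟩) ?_
    simpa using (H.mass.const_sub (ν.real univ)).const_mul B
  simpa using hsub.sub hdiff

section Functional

variable (H : SubconfigTendsto ν ε U X g e Y h) (hD : IsCompact D) (hνD : ∀ᵐ y ∂ν, y ∈ D)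

include H hD hνD

lemma tendsto_mEps (a : Fin N) :
    Tendsto (fun k => mEps ν (X k) (g k) ε (e a)) U (𝓝 (mEps ν Y h ε a)) := by
  simpa [mEps] using H.tendsto_integral_chiEps_smul hD hνD a (w := fun _ _ => (1 : ℝ))
    continuous_const

lemma tendsto_bEps [NeZero ν] (a : Fin N) :
    Tendsto (fun k => bEps ν (X k) (g k) ε (e a)) U (𝓝 (bEps ν Y h ε a)) :=
  ((H.tendsto_mEps hD hνD a).inv₀ (mEps_pos Y h ε a).ne').smul
    (H.tendsto_integral_chiEps_smul hD hνD a (w := fun _ y => y) continuous_snd)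

lemma tendsto_cellEnergyEps (a : Fin N) :
    Tendsto (fun k => cellEnergyEps ν (X k) (g k) ε (e a)) U (𝓝 (cellEnergyEps ν Y h ε a)) := by
  simpa only [cellEnergyEps, smul_eq_mul, mul_comm] using
    H.tendsto_integral_chiEps_smul hD hνD a (w := fun x y => ‖y - x‖ ^ 2) (by fun_prop)

lemma tendsto_repulsionEps (hY : Function.Injective Y) (a b : Fin N) :
    Tendsto (fun k => repulsionEps ν (X k) (g k) ε (e a) (e b)) U
      (𝓝 (repulsionEps ν Y h ε a b)) := by
  simp only [repulsionEps, e.injective.ne_iff]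
  split_ifs with hab
  · refine ((H.tendsto_mEps hD hνD a).mul (H.tendsto_mEps hD hνD b)).div
      (((H.tendsto_site a).sub (H.tendsto_site b)).norm.pow 2) ?_
    exact pow_ne_zero 2 (norm_ne_zero_iff.2 (sub_ne_zero.2 (hY.ne hab)))
  · exact tendsto_const_nhds

variable [NeZero ν] (hDconv : Convex ℝ D) {Φ : Euc d → ℝ} (hΦ : ContinuousOn Φ D) {η : ℝ}

include hDconv hΦ

lemma tendsto_partialFηEps (hY : Function.Injective Y) :
    Tendsto (fun k => partialFηEps ν (X k) (g k) ε Φ η e) U (𝓝 (FηEps ν Φ η Y h ε)) := by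
  have hΦb : ∀ a, Tendsto (fun k => Φ (bEps ν (X k) (g k) ε (e a))) U (𝓝 (Φ (bEps ν Y h ε a))) :=
    fun a => (hΦ _ (bEps_mem Y h ε hD hDconv hνD a)).tendsto.comp <|
      tendsto_nhdsWithin_iff.2 ⟨H.tendsto_bEps hD hνD a,
        .of_forall fun k => bEps_mem (X k) (g k) ε hD hDconv hνD (e a)⟩
  refine Tendsto.sub ?_ (Tendsto.const_mul _ (Tendsto.add ?_ ?_))
  · exact tendsto_finsetSum _ fun a _ => (H.tendsto_mEps hD hνD a).mul (hΦb a)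
  · exact tendsto_finsetSum _ fun a _ => H.tendsto_cellEnergyEps hD hνD a
  · exact tendsto_finsetSum _ fun a _ => tendsto_finsetSum _ fun b _ =>
      H.tendsto_repulsionEps hD hνD hY a b

lemma le_FηEps_of_tendsto [U.NeBot] [NeZero n] (hη : 0 ≤ η) (hY : Function.Injective Y) {L : ℝ}
    (hL : Tendsto (fun k => FηEps ν Φ η (X k) (g k) ε) U (𝓝 L)) : L ≤ FηEps ν Φ η Y h ε := by
  obtain ⟨C, hC⟩ := hD.exists_bound_of_continuousOn hΦ
  have hpartial := (H.tendsto_partialFηEps hD hνD hDconv hΦ (η := η) hY).add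
    ((H.mass.const_sub (ν.real univ)).const_mul C)
  rw [sub_self, mul_zero, add_zero] at hpartial
  exact le_of_tendsto_of_tendsto' hL hpartial fun k => FηEps_le_partialFηEps hD hDconv hνD
    (fun x hx => le_of_abs_le (hC x hx)) (X k) (g k) ε hη e

end Functional

end SubconfigTendsto

end Limits

section Compactness

variable {d n : ℕ} {ν : Measure (Euc d)} {ε : ℝ} {ι : Type*}
  {U : Ultrafilter ι} {X : ι → Fin n → Euc d} {g : ι → Fin n → ℝ} {ρ : ι → ℝ} {r : ℝ}

lemma limit_sites_ne {U : Filter ι} [U.NeBot] (hX : ∀ k, Function.Injective (X k))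
    (hρ : ∀ k, RnEps ν (X k) (g k) ε ≤ ρ k) (hρr : Tendsto ρ U (𝓝 r)) {i j : Fin n} (hij : i ≠ j)
    {m m' : ℝ} {x x' : Euc d} (hm : 0 < m) (hm' : 0 < m')
    (hmi : Tendsto (fun k => mEps ν (X k) (g k) ε i) U (𝓝 m))
    (hmj : Tendsto (fun k => mEps ν (X k) (g k) ε j) U (𝓝 m'))
    (hxi : Tendsto (fun k => X k i) U (𝓝 x)) (hxj : Tendsto (fun k => X k j) U (𝓝 x')) :
    x ≠ x' := by
  rintro rfl
  have hle : m * m' ≤ r * ‖x - x‖ ^ 2 :=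
    le_of_tendsto_of_tendsto' (hmi.mul hmj) (hρr.mul ((hxi.sub hxj).norm.pow 2)) fun k =>
      (mEps_mul_mEps_le (g k) ε ((hX k).ne hij)).trans
        (mul_le_mul_of_nonneg_right (hρ k) (sq_nonneg _))
  rw [sub_self, norm_zero, zero_pow two_ne_zero, mul_zero] at hle
  exact hle.not_gt (mul_pos hm hm')

variable [IsFiniteMeasure ν]

variable (ν ε U X g) in
lemma exists_tendsto_mEps (i : Fin n) :
    ∃ m, 0 ≤ m ∧ Tendsto (fun k => mEps ν (X k) (g k) ε i) U (𝓝 m) := by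
  obtain ⟨m, hm⟩ := exists_tendsto_of_isBoundedUnder_norm (U := U)
    (f := fun k => mEps ν (X k) (g k) ε i) (isBoundedUnder_of ⟨ν.real univ, fun k => by
      rw [Real.norm_of_nonneg (mEps_nonneg (X k) (g k) ε i)]
      exact mEps_le (X k) (g k) ε i⟩)
  exact ⟨m, ge_of_tendsto' hm fun k => mEps_nonneg (X k) (g k) ε i, hm⟩

lemma exists_tendsto_site [NeZero ν] {R : ℝ} (hR : ∀ᵐ y ∂ν, ‖y‖ ≤ R)
    (hρ : ∀ k, RnEps ν (X k) (g k) ε ≤ ρ k) (hρr : Tendsto ρ U (𝓝 r)) {i : Fin n} {m : ℝ}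
    (hm : 0 < m) (hmi : Tendsto (fun k => mEps ν (X k) (g k) ε i) U (𝓝 m)) :
    ∃ x, Tendsto (fun k => X k i) U (𝓝 x) := by
  have hbound : ∀ k, ‖X k i‖ ≤ √(2 * ρ k / mEps ν (X k) (g k) ε i + 2 * R ^ 2) := fun k => by
    have hmk := mEps_pos (ν := ν) (X k) (g k) ε i
    refine Real.le_sqrt_of_sq_le ?_
    rw [div_add' _ _ _ hmk.ne', le_div_iff₀ hmk]
    linarith [sq_norm_site_mul_mEps_le (X k) (g k) ε hR i,
      cellEnergyEps_le_RnEps (ν := ν) (X k) (g k) ε i, hρ k]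
  have hlim := (((hρr.const_mul 2).div hmi hm.ne').add_const (2 * R ^ 2)).sqrt
  exact exists_tendsto_of_isBoundedUnder_norm
    (hlim.isBoundedUnder_le.mono_le (.of_forall hbound))

lemma isBoundedUnder_ge_weight_sub [NeZero ν] (hε : 0 < ε) {R : ℝ} (hR : ∀ᵐ y ∂ν, ‖y‖ ≤ R)
    {U : Filter ι} {i j : Fin n} {m : ℝ} {x : Euc d} (hm : 0 < m)
    (hmi : Tendsto (fun k => mEps ν (X k) (g k) ε i) U (𝓝 m))
    (hxj : Tendsto (fun k => X k j) U (𝓝 x)) :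
    IsBoundedUnder (· ≥ ·) U fun k => g k i - g k j := by
  have hν : 0 < ν.real univ := measureReal_univ_pos
  have hlim := (((hmi.div_const (ν.real univ)).log (div_pos hm hν).ne').const_mul ε).sub
    ((hxj.norm.const_add R).pow 2)
  exact hlim.isBoundedUnder_ge.mono_ge
    (.of_forall fun k => mul_log_mEps_div_le_weight_sub (X k) (g k) hε hR i j)

theorem exists_subconfigTendsto [NeZero ν] [NeZero n] (hε : 0 < ε) {R : ℝ}
    (hR : ∀ᵐ y ∂ν, ‖y‖ ≤ R) (hX : ∀ k, Function.Injective (X k))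
    (hρ : ∀ k, RnEps ν (X k) (g k) ε ≤ ρ k) (hρr : Tendsto ρ U (𝓝 r)) :
    ∃ N, 0 < N ∧ N ≤ n ∧ ∃ (e : Fin N ↪ Fin n) (c : ι → ℝ) (Y : Fin N → Euc d) (h : Fin N → ℝ),
      Function.Injective Y ∧ SubconfigTendsto ν ε U X (fun k j => g k j - c k) e Y h := by
  choose M hM0 hM using exists_tendsto_mEps ν ε U X g
  have hMsum : ∑ i, M i = ν.real univ :=
    tendsto_nhds_unique (tendsto_finsetSum _ fun i _ => hM i)
      (by simp only [sum_mEps, tendsto_const_nhds])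
  obtain ⟨N, e, he, heM⟩ := exists_embedding_pos_sum_eq hM0
  rw [hMsum] at heM
  have hN : 0 < N := by
    rcases N.eq_zero_or_pos with rfl | hN
    · exact absurd heM (by simpa using (measureReal_univ_pos (μ := ν)).ne)
    · exact hN
  choose Y hY using fun a => exists_tendsto_site hR hρ hρr (he a) (hM (e a))
  let a₀ : Fin N := ⟨0, hN⟩
  have hweight : ∀ a b, IsBoundedUnder (· ≥ ·) (U : Filter ι) fun k => g k (e a) - g k (e b) :=
    fun a b => isBoundedUnder_ge_weight_sub hε hR (he a) (hM (e a)) (hY b)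
  have hweight_abs : ∀ a, IsBoundedUnder (· ≤ ·) (U : Filter ι)
      fun k => |g k (e a) - g k (e a₀)| := fun a =>
    isBoundedUnder_le_abs.2
      ⟨isBoundedUnder_ge_neg.1 (by simpa only [neg_sub] using hweight a₀ a), hweight a a₀⟩
  choose h hh using fun a => exists_tendsto_of_isBoundedUnder_norm (U := U)
    (f := fun k => g k (e a) - g k (e a₀)) (hweight_abs a)
  refine ⟨N, hN, by simpa using Fintype.card_le_of_embedding e, e, fun k => g k (e a₀), Y, h,
    fun a b => ?_, tendsto_pi_nhds.2 hY, tendsto_pi_nhds.2 hh, ?_⟩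
  · contrapose
    exact fun hab => limit_sites_ne hX hρ hρr (e.injective.ne hab) (he a) (he b) (hM _) (hM _)
      (hY a) (hY b)
  · simp only [mEps_sub_const, ← heM]
    exact tendsto_finsetSum _ fun b _ => hM (e b)

end Compactness

section Attainment

variable {d : ℕ} {D : Set (Euc d)} (hD : IsCompact D) (hDconv : Convex ℝ D)
  {ν : Measure (Euc d)} [IsFiniteMeasure ν] [NeZero ν] (hνD : ∀ᵐ y ∂ν, y ∈ D)
  {Φ : Euc d → ℝ} (hΦ : ContinuousOn Φ D) {ε η : ℝ} (hε : 0 < ε) (hη : 0 < η)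

include hD hDconv hνD hΦ hε hη

lemma exists_le_FηEps_of_tendsto {n : ℕ} [NeZero n] {ι : Type*} {U : Ultrafilter ι}
    {X : ι → Fin n → Euc d} {g : ι → Fin n → ℝ} (hX : ∀ k, Function.Injective (X k)) {L : ℝ}
    (hL : Tendsto (fun k => FηEps ν Φ η (X k) (g k) ε) U (𝓝 L)) :
    ∃ N, 0 < N ∧ N ≤ n ∧ ∃ (Y : Fin N → Euc d) (h : Fin N → ℝ), Function.Injective Y ∧
      L ≤ FηEps ν Φ η Y h ε := by
  obtain ⟨C, hC⟩ := hD.exists_bound_of_continuousOn hΦ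
  obtain ⟨R, hR⟩ := hD.isBounded.exists_norm_le
  have hpenalty : ∀ k, RnEps ν (X k) (g k) ε
      ≤ (C * ν.real univ - FηEps ν Φ η (X k) (g k) ε) / η := fun k => by
    rw [le_div_iff₀' hη]
    linarith [FηEps_le hD hDconv hνD (fun x hx => le_of_abs_le (hC x hx)) (η := η) (X k) (g k) ε]
  obtain ⟨N, hN, hNn, e, c, Y, h, hY, H⟩ := exists_subconfigTendsto hε (hνD.mono hR) hX
    hpenalty ((hL.const_sub _).div_const η)
  refine ⟨N, hN, hNn, Y, h, hY, H.le_FηEps_of_tendsto hD hνD hDconv hΦ hη.le hY ?_⟩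
  simpa only [FηEps_sub_const] using hL

lemma exists_forall_FηEps_le (n : ℕ) [NeZero n] :
    ∃ N, 0 < N ∧ N ≤ n ∧ ∃ (Y : Fin N → Euc d) (h : Fin N → ℝ), Function.Injective Y ∧
      ∀ (X : Fin n → Euc d) (g : Fin n → ℝ), Function.Injective X →
        FηEps ν Φ η X g ε ≤ FηEps ν Φ η Y h ε := by
  let S := {v | ∃ (X : Fin n → Euc d) (g : Fin n → ℝ), Function.Injective X ∧
    FηEps ν Φ η X g ε = v}
  have hbdd : BddAbove S := by
    obtain ⟨C, hC⟩ := hD.exists_bound_of_continuousOn hΦ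
    refine ⟨C * ν.real univ, ?_⟩
    rintro _ ⟨X, g, -, rfl⟩
    exact (FηEps_le hD hDconv hνD (fun x hx => le_of_abs_le (hC x hx)) X g ε).trans
      (sub_le_self _ (mul_nonneg hη.le (RnEps_nonneg X g ε)))
  rcases S.eq_empty_or_nonempty with hS | hS
  -- In dimension zero there are no `n`-tuples of distinct sites with `n ≥ 2`.
  · exact ⟨1, one_pos, NeZero.one_le, 0, 0, Function.injective_of_subsingleton _,
      fun X g hX => (eq_empty_iff_forall_notMem.1 hS _ ⟨X, g, hX, rfl⟩).elim⟩
  · obtain ⟨v, -, hv, hvS⟩ := exists_seq_tendsto_sSup hS hbdd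
    choose X g hX hXg using hvS
    obtain rfl : (fun k => FηEps ν Φ η (X k) (g k) ε) = v := funext hXg
    obtain ⟨N, hN, hNn, Y, h, hY, hle⟩ := exists_le_FηEps_of_tendsto hD hDconv hνD hΦ hε hη hX
      (hv.mono_left Nat.hyperfilter_le_atTop)
    exact ⟨N, hN, hNn, Y, h, hY, fun X g hX => (le_csSup hbdd ⟨X, g, hX, rfl⟩).trans hle⟩

end Attainment

theorem entropy_penalized_functional_attains_max_general
    {d : ℕ} {D : Set (Euc d)} (hD : IsCompact D) (hDconv : Convex ℝ D)
    {ν : Measure (Euc d)} [IsFiniteMeasure ν] [NeZero ν] (hνD : ν Dᶜ = 0)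
    {Φ : Euc d → ℝ} (hΦ : ContinuousOn Φ D)
    {ε : ℝ} (hε : 0 < ε) {η : ℝ} (hη : 0 < η) {l : ℕ} (hl : 0 < l) :
    ∃ n, 0 < n ∧ n ≤ l ∧
      ∃ (Xs : Fin n → Euc d) (gs : Fin n → ℝ), Function.Injective Xs ∧
        (∀ i, 0 < mEps ν Xs gs ε i) ∧
        ∀ k, 0 < k → k ≤ l → ∀ (X : Fin k → Euc d) (g : Fin k → ℝ), Function.Injective X →
          FηEps ν Φ η X g ε ≤ FηEps ν Φ η Xs gs ε := by
  choose N hN hNk Y h hY hmax using fun k : ℕ =>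
    exists_forall_FηEps_le hD hDconv (mem_ae_iff.2 hνD) hΦ hε hη (k + 1)
  obtain ⟨j, hj, hbest⟩ := Finset.exists_max_image (Finset.range l)
    (fun k => FηEps ν Φ η (Y k) (h k) ε) ⟨0, Finset.mem_range.2 hl⟩
  refine ⟨N j, hN j, (hNk j).trans (Finset.mem_range.1 hj), Y j, h j, hY j,
    mEps_pos (Y j) (h j) ε, fun k hk hkl X g hX => ?_⟩
  obtain ⟨k, rfl⟩ := Nat.exists_eq_add_one.2 hk
  exact (hmax k X g hX).trans (hbest k (Finset.mem_range.2 hkl))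

/-- for every number of sites `l` there is `n ≤ l` such that the
entropy-regularized penalized functional `F_n^{η,ε}` admits a maximizer `(X*, g*)` over
`n`-tuples of pairwise distinct sites and weights, with all regularized cell masses positive,
whose value dominates the supremum of `F_l^{η,ε}`. -/
theorem entropy_penalized_functional_attains_max
    {d : ℕ} (D : Set (Euc d)) (hD : IsCompact D) (hDconv : Convex ℝ D)
    (ν : Measure (Euc d)) [IsProbabilityMeasure ν] (hνD : ν Dᶜ = 0)
    (hac : ν ≪ (volume : Measure (Euc d)))
    (Φ : Euc d → ℝ) (hΦ : ContinuousOn Φ D)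
    (ε : ℝ) (hε : 0 < ε) (η : ℝ) (hη : 0 < η) (l : ℕ) (hl : 0 < l) :
    ∃ n, 0 < n ∧ n ≤ l ∧
      ∃ (Xs : Fin n → Euc d) (gs : Fin n → ℝ), Function.Injective Xs ∧
        (∀ i, 0 < mEps ν Xs gs ε i) ∧
        (∀ (X : Fin n → Euc d) (g : Fin n → ℝ), Function.Injective X →
          FηEps ν Φ η X g ε ≤ FηEps ν Φ η Xs gs ε) ∧
        (∀ (X : Fin l → Euc d) (g : Fin l → ℝ), Function.Injective X →
          FηEps ν Φ η X g ε ≤ FηEps ν Φ η Xs gs ε) := by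
  obtain ⟨n, hn, hnl, Xs, gs, hXs, hm, hmax⟩ :=
    entropy_penalized_functional_attains_max_general hD hDconv hνD hΦ hε hη hl
  exact ⟨n, hn, hnl, Xs, gs, hXs, hm, hmax n hn hnl, hmax l hl le_rfl⟩
end
end
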